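/- Let n ≥ 5. For a generic choice of two linear subspaces L, M ⊂ ℂ^{n+1} of dimension n−2 (codimension 3), of points l₁,…,l_{n−2} ∈ L and m₁,…,m_{n−2} ∈ M, and of points p₁, p₂ ∈ ℂ^{n+1}, the ℂ-vector space of homogeneous cubic polynomials in ℂ[x₀,…,xₙ] that vanish at every point of L ∪ M and are singular at all 2n−2 points l₁,…,l_{n−2},m₁,…,m_{n−2},p₁,p₂ has dimension n+1. Moreover, every cubic in this space is singular at every point of the subspace L ∩ M, and the common singular locus of the space is zero-dimensional at p₁ and at p₂. -/

import Mathlib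

/-! Choose linear forms `a₁, a₂, a₃` and `b₁, b₂, b₃` cutting out `L` and `M`, and complete them by
`n - 5` forms `z` to a coordinate system. A cubic vanishing on `L ∪ M` is then a combination of the
monomials `a² b`, `a a' b`, `a b²`, `a b b'`, `a z b` (`mem_range_cubic`). All of these are
singular where every `a` and every `b` vanishes, which gives the claim about `L ∩ M`. Being
singular at a point of `L` amounts to the vanishing of three derivatives only, as the others vanish
on `L` anyway, and likewise for `M`. So the space `W` of the theorem is the kernel of
`6 (n - 2) + 2 (n + 1)` linear equations on a space of dimension `6 (n - 2) + 3 (n + 1)`, and has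
dimension `n + 1` if these equations are independent.

For the singular locus near `p = p₁` or `p = p₂`, fix a direction `u` and add `n + 1` further
equations (`args`): `n` coordinates of the vector `Hess f(p) u`, and one auxiliary equation to make
the system square. If the square system is bijective, then the first equations are independent
(`finrank_singSpace`), and `W` contains cubics whose vectors `Hess f(p) u` are dual to `n`
coordinates transversal to `p`. The equations `∂_u f = 0` for these cubics have full Jacobian rank
transversally to `p`, so that near `p` the common singular locus is the line through `p`
(`locus_near`). As the `∂_u f` are quadrics, this needs no implicit function theorem: if `q` is
singular for these `f`, and `p'` is the multiple of `p` with the same first coordinate, then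
`0 = ∂_u f(q) - ∂_u f(p') = ½ D³f (q + p', u, q - p')`. Over these cubics, the linear map applied
to `q - p'`, in the `n` coordinates transversal to `p`, depends continuously on `q` and is
invertible for `q = p`.

Equations for `L` and `M`, hence the whole square matrix, are polynomial in the parameters of the
configuration (`frame`). Bijectivity is therefore generic as soon as it holds for one configuration
(`generic_of_base`). Such a configuration is given by `baseL`, `baseM` and `baseP`: `L` and `M` are
coordinate subspaces, and the points are sparse enough for the equations to be solved by hand
(`base_ker`). The coordinates `z` are grouped in pairs, with one left over if `n` is even. The
coefficients at the monomials `a z b` for one pair satisfy a closed system of equations, so the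
solution is uniform in `n`. -/

open MvPolynomial

noncomputable section

/-- The linear form `a₀x₀ + ⋯ + aₙxₙ` with coefficient vector `a`. -/
def linForm {n : ℕ} (a : Fin (n + 1) → ℂ) : MvPolynomial (Fin (n + 1)) ℂ :=
  ∑ i, C (a i) * X i

/-- Evaluation at the point `v`, as a linear map. -/
def evalAt {n : ℕ} (v : Fin (n + 1) → ℂ) : MvPolynomial (Fin (n + 1)) ℂ →ₗ[ℂ] ℂ :=
  (aeval v).toLinearMap

/-- The linear map `f ↦ (∂f/∂xᵢ)(p)`. -/
def evalPDeriv {n : ℕ} (p : Fin (n + 1) → ℂ) (i : Fin (n + 1)) :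
    MvPolynomial (Fin (n + 1)) ℂ →ₗ[ℂ] ℂ :=
  evalAt p ∘ₗ (pderiv i).toLinearMap

/-- `f` is singular at `p`: all partial derivatives of `f` vanish at `p`. -/
def SingularAt {n : ℕ} (f : MvPolynomial (Fin (n + 1)) ℂ) (p : Fin (n + 1) → ℂ) : Prop :=
  ∀ i, evalPDeriv p i f = 0

/-- The space of homogeneous degree-`d` polynomials in `n+1` variables that vanish at every
point of `V` and are singular at every point of `S`. -/
def SingSpace (n : ℕ) (d : ℕ) (S V : Set (Fin (n + 1) → ℂ)) :
    Submodule ℂ (MvPolynomial (Fin (n + 1)) ℂ) :=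
  homogeneousSubmodule (Fin (n + 1)) ℂ d ⊓ (⨅ v ∈ V, LinearMap.ker (evalAt v)) ⊓
    ⨅ p ∈ S, ⨅ i, LinearMap.ker (evalPDeriv p i)

/-- A property of parameters `t : ι → ℂ` holds for a generic choice of `t` if there is a
nonzero polynomial `F` in the variables `ι` such that the property holds whenever
`F(t) ≠ 0`. -/
def Generic {ι : Type} [Fintype ι] (P : (ι → ℂ) → Prop) : Prop :=
  ∃ F : MvPolynomial ι ℂ, F ≠ 0 ∧ ∀ t : ι → ℂ, eval t F ≠ 0 → P t

end

/-! ### Polynomial functions and genericity -/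

/-- A function of the parameters that is given by a polynomial. -/
def PolyFun {T : Type} (φ : (T → ℂ) → ℂ) : Prop :=
  ∃ F : MvPolynomial T ℂ, ∀ t, eval t F = φ t

namespace PolyFun

variable {T : Type} {φ ψ : (T → ℂ) → ℂ}

lemma coord (i : T) : PolyFun fun t : T → ℂ => t i := ⟨X i, fun t => by simp⟩

lemma const (c : ℂ) : PolyFun fun _ : T → ℂ => c := ⟨C c, fun t => by simp⟩

lemma add (h : PolyFun φ) (h' : PolyFun ψ) : PolyFun fun t => φ t + ψ t := by
  obtain ⟨F, hF⟩ := h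
  obtain ⟨F', hF'⟩ := h'
  exact ⟨F + F', fun t => by simp [hF, hF']⟩

lemma sub (h : PolyFun φ) (h' : PolyFun ψ) : PolyFun fun t => φ t - ψ t := by
  obtain ⟨F, hF⟩ := h
  obtain ⟨F', hF'⟩ := h'
  exact ⟨F - F', fun t => by simp [hF, hF']⟩

lemma mul (h : PolyFun φ) (h' : PolyFun ψ) : PolyFun fun t => φ t * ψ t := by
  obtain ⟨F, hF⟩ := h
  obtain ⟨F', hF'⟩ := h'
  exact ⟨F * F', fun t => by simp [hF, hF']⟩

lemma sum {I : Type*} (s : Finset I) {φ : I → (T → ℂ) → ℂ} (h : ∀ i, PolyFun (φ i)) :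
    PolyFun fun t => ∑ i ∈ s, φ i t := by
  choose F hF using h
  exact ⟨∑ i ∈ s, F i, fun t => by simp [hF]⟩

lemma det {I : Type*} [Fintype I] [DecidableEq I] {M : (T → ℂ) → Matrix I I ℂ}
    (h : ∀ i j, PolyFun fun t => M t i j) : PolyFun fun t => (M t).det := by
  choose F hF using h
  refine ⟨(Matrix.of F).det, fun t => ?_⟩
  rw [RingHom.map_det]
  congr 1
  ext i j
  simp [hF]

lemma adjugate {I : Type*} [Fintype I] [DecidableEq I] {M : (T → ℂ) → Matrix I I ℂ}
    (h : ∀ i j, PolyFun fun t => M t i j) (i j : I) :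
    PolyFun fun t => (M t).adjugate i j := by
  choose F hF using h
  refine ⟨(Matrix.of F).adjugate i j, fun t => ?_⟩
  have h1 : M t = (eval t).mapMatrix (Matrix.of F) := by
    ext i j
    simp [hF]
  change _ = (M t).adjugate i j
  rw [h1, ← RingHom.map_adjugate]
  simp

lemma matrix_mul {I J K : Type*} [Fintype J] {M : (T → ℂ) → Matrix I J ℂ}
    {N : (T → ℂ) → Matrix J K ℂ} (hM : ∀ i j, PolyFun fun t => M t i j)
    (hN : ∀ i j, PolyFun fun t => N t i j) (i : I) (k : K) :
    PolyFun fun t => (M t * N t) i k := by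
  simp only [Matrix.mul_apply]
  exact sum _ fun j => (hM i j).mul (hN j k)

lemma mulVec {I J : Type*} [Fintype J] {M : (T → ℂ) → Matrix I J ℂ}
    {v : (T → ℂ) → J → ℂ} (hM : ∀ i j, PolyFun fun t => M t i j)
    (hv : ∀ j, PolyFun fun t => v t j) (i : I) :
    PolyFun fun t => (M t).mulVec (v t) i := by
  simp only [Matrix.mulVec, dotProduct]
  exact sum _ fun j => (hM i j).mul (hv j)

end PolyFun

lemma Generic.mono {T : Type} [Fintype T] {P Q : (T → ℂ) → Prop} (h : Generic P)
    (hPQ : ∀ t, P t → Q t) : Generic Q := by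
  obtain ⟨F, hF, h⟩ := h
  exact ⟨F, hF, fun t ht => hPQ t (h t ht)⟩

lemma Generic.and {T : Type} [Fintype T] {P Q : (T → ℂ) → Prop} (h : Generic P)
    (h' : Generic Q) : Generic fun t => P t ∧ Q t := by
  obtain ⟨F, hF, h⟩ := h
  obtain ⟨F', hF', h'⟩ := h'
  refine ⟨F * F', mul_ne_zero hF hF', fun t ht => ?_⟩
  rw [map_mul] at ht
  exact ⟨h t (left_ne_zero_of_mul ht), h' t (right_ne_zero_of_mul ht)⟩

lemma PolyFun.generic_ne_zero {T : Type} [Fintype T] {φ : (T → ℂ) → ℂ} (h : PolyFun φ)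
    {t₀ : T → ℂ} (h₀ : φ t₀ ≠ 0) : Generic fun t => φ t ≠ 0 := by
  obtain ⟨F, hF⟩ := h
  refine ⟨F, ?_, fun t ht => by rwa [hF] at ht⟩
  rintro rfl
  exact h₀ (by rw [← hF, map_zero])

/-- Semicontinuity of the rank: a square system of linear equations with polynomial
coefficients that has only the zero solution at one parameter is generically bijective. -/
lemma generic_bijective {T : Type} [Fintype T] {I J : Type*} [Fintype I] [Fintype J]
    {M : (T → ℂ) → Matrix I J ℂ} (hM : ∀ i j, PolyFun fun t => M t i j)
    (hcard : Fintype.card I = Fintype.card J) {t₀ : T → ℂ}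
    (h₀ : ∀ v, (M t₀).mulVec v = 0 → v = 0) :
    Generic fun t => Function.Bijective (M t).mulVec := by
  classical
  let σ : I ≃ J := Fintype.equivOfCardEq hcard
  have hdet : PolyFun fun t => ((M t).submatrix id σ).det := PolyFun.det fun i j => hM i (σ j)
  have hmul : ∀ t v, (M t).mulVec v = ((M t).submatrix id σ).mulVec (v ∘ σ) := by
    intro t v
    ext i
    simp only [Matrix.mulVec, dotProduct, Matrix.submatrix_apply, id, Function.comp]
    exact (σ.sum_comp fun j => M t i j * v j).symm
  refine (hdet.generic_ne_zero (t₀ := t₀) ?_).mono fun t ht => ?_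
  · intro h
    obtain ⟨v, hv, hv0⟩ := Matrix.exists_mulVec_eq_zero_iff.mpr h
    refine hv ?_
    have := h₀ (v ∘ σ.symm) (by rw [hmul]; simpa [Function.comp_assoc] using hv0)
    ext i
    simpa using congrFun this (σ i)
  · have hu : IsUnit ((M t).submatrix id σ) := by
      rw [Matrix.isUnit_iff_isUnit_det]
      exact ht.isUnit
    have h1 : Function.Bijective ((M t).submatrix id σ).mulVec :=
      ⟨Matrix.mulVec_injective_iff_isUnit.mpr hu, Matrix.mulVec_surjective_iff_isUnit.mpr hu⟩
    have h2 : (M t).mulVec = ((M t).submatrix id σ).mulVec ∘ (fun v => v ∘ σ) :=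
      funext (hmul t)
    rw [h2]
    exact h1.comp (Equiv.arrowCongr σ.symm (Equiv.refl ℂ)).bijective

/-! ### Adapted coordinates and polar forms -/

/-- Coordinates adapted to a pair of subspaces: three linear forms `a i` cutting out the first
one, three linear forms `b j` cutting out the second one, and further forms `z k`. -/
abbrev Var (Z : Type) : Type := Fin 3 ⊕ Fin 3 ⊕ Z

/-- Monomials divisible by some `a i` and some `b j`; see `trip` for the meaning of an index. -/
abbrev Mon (Z : Type) : Type := Fin 3 × Fin 3 × (Fin 4 ⊕ Z)

/-- The three factors of a monomial: the indices stand, in this order, for `aᵢ² bⱼ`,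
`aᵢ₊₁ aᵢ₊₂ bⱼ`, `aᵢ bⱼ²`, `aᵢ bⱼ₊₁ bⱼ₊₂` and `aᵢ z bⱼ`, where `Fin 3` is cyclic. The first factor
is always an `a`, the last one always a `b`. -/
def trip {Z : Type} : Mon Z → Var Z × Var Z × Var Z
  | (i, j, Sum.inl 0) => (Sum.inl i, Sum.inl i, Sum.inr (Sum.inl j))
  | (i, j, Sum.inl 1) => (Sum.inl (i + 1), Sum.inl (i + 2), Sum.inr (Sum.inl j))
  | (i, j, Sum.inl 2) => (Sum.inl i, Sum.inr (Sum.inl j), Sum.inr (Sum.inl j))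
  | (i, j, Sum.inl 3) =>
      (Sum.inl i, Sum.inr (Sum.inl (j + 1)), Sum.inr (Sum.inl (j + 2)))
  | (i, j, Sum.inr k) => (Sum.inl i, Sum.inr (Sum.inr k), Sum.inr (Sum.inl j))

/-- The polarization of a product of three coordinates: the sum over all six ways of
distributing the arguments over the factors. -/
def perm3 {V : Type} (x y w : V → ℂ) (c : V × V × V) : ℂ :=
  x c.1 * y c.2.1 * w c.2.2 + x c.1 * y c.2.2 * w c.2.1 + x c.2.1 * y c.1 * w c.2.2 +
    x c.2.1 * y c.2.2 * w c.1 + x c.2.2 * y c.1 * w c.2.1 + x c.2.2 * y c.2.1 * w c.1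

section Polar

variable {Z : Type} [Fintype Z]

/-- The symmetric trilinear form of the cubic `h` with coefficients `e` on the monomials `Mon Z`,
that is, the third derivative of `h`. So `polar e y y w = 2 ∂_w h(y)`, and
`polar e y u w = ∂_u ∂_w h(y)`. -/
def polar (e : Mon Z → ℂ) (x y w : Var Z → ℂ) : ℂ :=
  ∑ J, e J * perm3 x y w (trip J)

lemma polar_add_coeff (e e' : Mon Z → ℂ) (x y w : Var Z → ℂ) :
    polar (e + e') x y w = polar e x y w + polar e' x y w := by
  simp only [polar, Pi.add_apply, add_mul, Finset.sum_add_distrib]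

lemma polar_smul_coeff (r : ℂ) (e : Mon Z → ℂ) (x y w : Var Z → ℂ) :
    polar (r • e) x y w = r * polar e x y w := by
  simp only [polar, Pi.smul_apply, smul_eq_mul, Finset.mul_sum, mul_assoc]

lemma polar_swap₁₂ (e : Mon Z → ℂ) (x y w : Var Z → ℂ) : polar e x y w = polar e y x w := by
  refine Finset.sum_congr rfl fun J _ => ?_
  simp only [perm3]
  ring

lemma polar_swap₂₃ (e : Mon Z → ℂ) (x y w : Var Z → ℂ) : polar e x y w = polar e x w y := by
  refine Finset.sum_congr rfl fun J _ => ?_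
  simp only [perm3]
  ring

lemma polar_add₃ (e : Mon Z → ℂ) (x y w w' : Var Z → ℂ) :
    polar e x y (w + w') = polar e x y w + polar e x y w' := by
  simp only [polar, ← Finset.sum_add_distrib]
  refine Finset.sum_congr rfl fun J _ => ?_
  simp only [perm3, Pi.add_apply]
  ring

lemma polar_smul₃ (e : Mon Z → ℂ) (x y : Var Z → ℂ) (r : ℂ) (w : Var Z → ℂ) :
    polar e x y (r • w) = r * polar e x y w := by
  simp only [polar, Finset.mul_sum]
  refine Finset.sum_congr rfl fun J _ => ?_
  simp only [perm3, Pi.smul_apply, smul_eq_mul]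
  ring

/-- `polar e x y` as a linear form. -/
def polarLin (e : Mon Z → ℂ) (x y : Var Z → ℂ) : (Var Z → ℂ) →ₗ[ℂ] ℂ where
  toFun := polar e x y
  map_add' := polar_add₃ e x y
  map_smul' := polar_smul₃ e x y

lemma polar_eq_sum [DecidableEq Z] (e : Mon Z → ℂ) (x y w : Var Z → ℂ) :
    polar e x y w = ∑ c, w c * polar e x y (Pi.single c 1) := by
  have h := (polarLin e x y).pi_apply_eq_sum_univ w
  have h1 : ∀ c : Var Z, (fun j => if c = j then (1 : ℂ) else 0) = Pi.single c 1 := fun c => by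
    ext j
    simp [Pi.single_apply, eq_comm]
  simp only [smul_eq_mul, h1] at h
  exact h

lemma polar_sub_sq (e : Mon Z → ℂ) (y y' u : Var Z → ℂ) :
    polar e (y + y') u (y - y') = polar e y y u - polar e y' y' u := by
  simp only [polar, ← Finset.sum_sub_distrib]
  refine Finset.sum_congr rfl fun J _ => ?_
  simp only [perm3, Pi.add_apply, Pi.sub_apply]
  ring

lemma polar_add_sq (e : Mon Z → ℂ) (x y w : Var Z → ℂ) :
    polar e (x + y) (x + y) w = polar e x x w + 2 * polar e x y w + polar e y y w := by
  simp only [polar, Finset.mul_sum, ← Finset.sum_add_distrib]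
  refine Finset.sum_congr rfl fun J _ => ?_
  simp only [perm3, Pi.add_apply]
  ring

lemma polar_smul_smul (e : Mon Z → ℂ) (r : ℂ) (y w : Var Z → ℂ) :
    polar e (r • y) (r • y) w = r ^ 2 * polar e y y w := by
  simp only [polar, Finset.mul_sum]
  refine Finset.sum_congr rfl fun J _ => ?_
  simp only [perm3, Pi.smul_apply, smul_eq_mul]
  ring

/-- Cubics in the span of the monomials `Mon Z` are singular where all `a i` and `b j` vanish. -/
lemma polar_eq_zero_of_inter (e : Mon Z → ℂ) (y w : Var Z → ℂ) (ha : ∀ i, y (Sum.inl i) = 0)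
    (hb : ∀ j, y (Sum.inr (Sum.inl j)) = 0) : polar e y y w = 0 := by
  refine Finset.sum_eq_zero fun J _ => ?_
  obtain ⟨i, j, k | k⟩ := J
  · fin_cases k <;> simp [trip, perm3, ha, hb]
  · simp [trip, perm3, ha, hb]

/-- On the first subspace only the derivatives in the `a`-directions can be nonzero. -/
lemma polar_eq_zero_of_left [DecidableEq Z] (e : Mon Z → ℂ) (y : Var Z → ℂ)
    (ha : ∀ i, y (Sum.inl i) = 0) (h : ∀ i, polar e y y (Pi.single (Sum.inl i) 1) = 0)
    (w : Var Z → ℂ) : polar e y y w = 0 := by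
  rw [polar_eq_sum]
  refine Finset.sum_eq_zero fun c _ => ?_
  obtain i | c := c
  · rw [h, mul_zero]
  · refine mul_eq_zero_of_right _ (Finset.sum_eq_zero fun J _ => ?_)
    obtain ⟨i, j, k | k⟩ := J
    · fin_cases k <;> simp [trip, perm3, ha]
    · simp [trip, perm3, ha]

lemma polar_eq_zero_of_right [DecidableEq Z] (e : Mon Z → ℂ) (y : Var Z → ℂ)
    (hb : ∀ j, y (Sum.inr (Sum.inl j)) = 0)
    (h : ∀ j, polar e y y (Pi.single (Sum.inr (Sum.inl j)) 1) = 0)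
    (w : Var Z → ℂ) : polar e y y w = 0 := by
  rw [polar_eq_sum]
  refine Finset.sum_eq_zero fun c _ => ?_
  obtain i | j | k := c
  · refine mul_eq_zero_of_right _ (Finset.sum_eq_zero fun J _ => ?_)
    obtain ⟨i, j, k | k⟩ := J
    · fin_cases k <;> simp [trip, perm3, hb]
    · simp [trip, perm3, hb]
  · rw [h, mul_zero]
  · refine mul_eq_zero_of_right _ (Finset.sum_eq_zero fun J _ => ?_)
    obtain ⟨i, j, k | k⟩ := J
    · fin_cases k <;> simp [trip, perm3, hb]
    · simp [trip, perm3, hb]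

end Polar

/-! ### Cubics in adapted coordinates -/

section Cubic

variable {n : ℕ} {Z : Type} [Fintype Z]

/-- The cubic with coefficients `e` on the monomials `Mon Z`, where the coordinates are the linear
forms given by the rows of `G`. -/
noncomputable def cubic (G : Matrix (Var Z) (Fin (n + 1)) ℂ) :
    (Mon Z → ℂ) →ₗ[ℂ] MvPolynomial (Fin (n + 1)) ℂ :=
  ∑ J : Mon Z, (LinearMap.proj J).smulRight
    (linForm (G (trip J).1) * linForm (G (trip J).2.1) * linForm (G (trip J).2.2))

lemma cubic_apply (G : Matrix (Var Z) (Fin (n + 1)) ℂ) (e : Mon Z → ℂ) :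
    cubic G e = ∑ J : Mon Z, e J •
      (linForm (G (trip J).1) * linForm (G (trip J).2.1) * linForm (G (trip J).2.2)) := by
  simp [cubic]

lemma pderiv_linForm (g : Fin (n + 1) → ℂ) (i : Fin (n + 1)) :
    pderiv i (linForm g) = C (g i) := by
  classical
  simp only [linForm, map_sum, Derivation.leibniz, pderiv_X, pderiv_C]
  simp [Pi.single_apply]

lemma aeval_linForm (g q : Fin (n + 1) → ℂ) : aeval q (linForm g) = g ⬝ᵥ q := by
  simp [linForm, dotProduct]

lemma isHomogeneous_linForm (g : Fin (n + 1) → ℂ) : (linForm g).IsHomogeneous 1 := by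
  refine IsHomogeneous.sum _ _ _ fun i _ => ?_
  simpa using (isHomogeneous_C _ (g i)).mul (isHomogeneous_X ℂ i)

lemma evalPDeriv_apply (q : Fin (n + 1) → ℂ) (i : Fin (n + 1))
    (f : MvPolynomial (Fin (n + 1)) ℂ) : evalPDeriv q i f = aeval q (pderiv i f) := rfl

lemma evalPDeriv_cubic (G : Matrix (Var Z) (Fin (n + 1)) ℂ) (e : Mon Z → ℂ)
    (q : Fin (n + 1) → ℂ) (i : Fin (n + 1)) :
    2 * evalPDeriv q i (cubic G e) = polar e (G.mulVec q) (G.mulVec q) (fun c => G c i) := by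
  simp only [cubic_apply, polar, map_sum, Finset.mul_sum]
  refine Finset.sum_congr rfl fun J _ => ?_
  simp only [evalPDeriv_apply, map_smul, Derivation.leibniz, pderiv_linForm, map_add, map_mul,
    aeval_linForm, smul_eq_mul, perm3, Matrix.mulVec, aeval_C, Algebra.algebraMap_self,
    RingHom.id_apply]
  ring

/-- The gradient of a cubic in terms of its polar form; it may be tested in the adapted
coordinates, because `G` is surjective. -/
lemma singularAt_cubic_iff [DecidableEq Z] {G : Matrix (Var Z) (Fin (n + 1)) ℂ}
    {H : Matrix (Fin (n + 1)) (Var Z) ℂ} (hGH : G * H = 1)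
    (e : Mon Z → ℂ) (q : Fin (n + 1) → ℂ) :
    SingularAt (cubic G e) q ↔ ∀ w, polar e (G.mulVec q) (G.mulVec q) w = 0 := by
  have key : ∀ i, evalPDeriv q i (cubic G e) = 0 ↔
      polar e (G.mulVec q) (G.mulVec q) (fun c => G c i) = 0 := fun i => by
    rw [← evalPDeriv_cubic]
    simp
  simp only [SingularAt, key]
  refine ⟨fun h w => ?_, fun h i => h _⟩
  have hw : w = ∑ i, (H.mulVec w) i • fun c => G c i := by
    have h1 : G.mulVec (H.mulVec w) = w := by rw [Matrix.mulVec_mulVec, hGH, Matrix.one_mulVec]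
    conv_lhs => rw [← h1]
    ext c
    simp [Matrix.mulVec, dotProduct, mul_comm]
  have h2 : polarLin e (G.mulVec q) (G.mulVec q) w = 0 := by
    rw [hw, map_sum]
    refine Finset.sum_eq_zero fun i _ => ?_
    rw [map_smul]
    exact smul_eq_zero_of_right _ (h i)
  exact h2

lemma isHomogeneous_cubic (G : Matrix (Var Z) (Fin (n + 1)) ℂ) (e : Mon Z → ℂ) :
    (cubic G e).IsHomogeneous 3 := by
  rw [cubic_apply]
  refine IsHomogeneous.sum _ _ _ fun J _ => ?_
  rw [smul_eq_C_mul]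
  simpa using (isHomogeneous_C _ (e J)).mul (((isHomogeneous_linForm (G (trip J).1)).mul
    (isHomogeneous_linForm (G (trip J).2.1))).mul (isHomogeneous_linForm (G (trip J).2.2)))

lemma evalAt_cubic_left (G : Matrix (Var Z) (Fin (n + 1)) ℂ) (e : Mon Z → ℂ)
    (q : Fin (n + 1) → ℂ) (hq : ∀ i, G.mulVec q (Sum.inl i) = 0) :
    evalAt q (cubic G e) = 0 := by
  rw [cubic_apply, map_sum]
  refine Finset.sum_eq_zero fun J _ => ?_
  have h : ∃ i, (trip J).1 = Sum.inl i := by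
    obtain ⟨i, j, k | k⟩ := J
    · fin_cases k <;> exact ⟨_, rfl⟩
    · exact ⟨_, rfl⟩
  obtain ⟨i, hi⟩ := h
  have h0 : G (Sum.inl i) ⬝ᵥ q = 0 := hq i
  simp only [map_smul, evalAt, AlgHom.toLinearMap_apply, map_mul, aeval_linForm, hi, h0]
  simp

lemma evalAt_cubic_right (G : Matrix (Var Z) (Fin (n + 1)) ℂ) (e : Mon Z → ℂ)
    (q : Fin (n + 1) → ℂ) (hq : ∀ i, G.mulVec q (Sum.inr (Sum.inl i)) = 0) :
    evalAt q (cubic G e) = 0 := by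
  rw [cubic_apply, map_sum]
  refine Finset.sum_eq_zero fun J _ => ?_
  have h : ∃ i, (trip J).2.2 = Sum.inr (Sum.inl i) := by
    obtain ⟨i, j, k | k⟩ := J
    · fin_cases k <;> exact ⟨_, rfl⟩
    · exact ⟨_, rfl⟩
  obtain ⟨i, hi⟩ := h
  have h0 : G (Sum.inr (Sum.inl i)) ⬝ᵥ q = 0 := hq i
  simp only [map_smul, evalAt, AlgHom.toLinearMap_apply, map_mul, aeval_linForm, hi, h0]
  simp

/-- A polynomial vanishing on the coordinate subspace `{y | y c = 0 for c ∈ s}` has only monomials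
that involve one of the variables in `s`. -/
lemma exists_mem_support_ne_zero {V : Type} (s : Set V) (f : MvPolynomial V ℂ)
    (hf : ∀ y : V → ℂ, (∀ c ∈ s, y c = 0) → eval y f = 0) :
    ∀ d ∈ f.support, ∃ c ∈ s, d c ≠ 0 := by
  classical
  rw [← mem_ideal_span_X_image, ← Ideal.Quotient.eq_zero_iff_mem]
  -- The substitution `ρ` kills the variables in `s`; it does not change classes modulo the ideal.
  let ρ : MvPolynomial V ℂ →ₐ[ℂ] MvPolynomial V ℂ :=
    aeval fun c => if c ∈ s then 0 else X c
  have h0 : ρ f = 0 := by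
    refine MvPolynomial.funext fun y => ?_
    have h1 := hf (fun c => if c ∈ s then 0 else y c) fun c hc => by simp [hc]
    rw [map_zero, ← h1]
    have h2 : (aeval y : MvPolynomial V ℂ →ₐ[ℂ] ℂ).comp ρ =
        aeval fun c => if c ∈ s then 0 else y c := by
      ext c
      by_cases hc : c ∈ s <;> simp [ρ, hc]
    exact congrArg (fun φ : MvPolynomial V ℂ →ₐ[ℂ] ℂ => φ f) h2
  have h3 : (Ideal.Quotient.mkₐ ℂ (Ideal.span (X '' s : Set (MvPolynomial V ℂ)))).comp ρ =
      Ideal.Quotient.mkₐ ℂ _ := by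
    ext c
    by_cases hc : c ∈ s
    · have : Ideal.Quotient.mk (Ideal.span (X '' s : Set (MvPolynomial V ℂ))) (X c) = 0 :=
        Ideal.Quotient.eq_zero_iff_mem.mpr (Ideal.subset_span ⟨c, hc, rfl⟩)
      simp [ρ, hc, this]
    · simp [ρ, hc]
  have h4 := congrArg (fun φ => φ f) h3
  simpa [h0] using h4.symm

lemma mem_range_cubic_of_prod [DecidableEq Z] (G : Matrix (Var Z) (Fin (n + 1)) ℂ)
    (i j : Fin 3) (c : Var Z) :
    linForm (G (Sum.inl i)) * linForm (G (Sum.inr (Sum.inl j))) * linForm (G c) ∈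
      LinearMap.range (cubic G) := by
  have key : ∀ J : Mon Z, linForm (G (trip J).1) * linForm (G (trip J).2.1) *
      linForm (G (trip J).2.2) ∈ LinearMap.range (cubic G) := fun J => by
    refine ⟨Pi.single J 1, ?_⟩
    rw [cubic_apply, Finset.sum_eq_single J]
    · simp
    · intro J' _ hJ'
      simp [hJ']
    · simp
  obtain i' | j' | k := c
  · have h : i = i' ∨ ∃ l : Fin 3, (i = l + 1 ∧ i' = l + 2) ∨ (i = l + 2 ∧ i' = l + 1) := by
      decide +revert
    obtain rfl | ⟨l, ⟨rfl, rfl⟩ | ⟨rfl, rfl⟩⟩ := h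
    · convert key (i, j, Sum.inl 0) using 1
      simp only [trip]; ring
    · convert key (l, j, Sum.inl 1) using 1
      simp only [trip]; ring
    · convert key (l, j, Sum.inl 1) using 1
      simp only [trip]; ring
  · have h : j = j' ∨ ∃ l : Fin 3, (j = l + 1 ∧ j' = l + 2) ∨ (j = l + 2 ∧ j' = l + 1) := by
      decide +revert
    obtain rfl | ⟨l, ⟨rfl, rfl⟩ | ⟨rfl, rfl⟩⟩ := h
    · exact key (i, j, Sum.inl 2)
    · exact key (i, l, Sum.inl 3)
    · convert key (i, l, Sum.inl 3) using 1
      simp only [trip]; ring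
  · convert key (i, j, Sum.inr k) using 1
    simp only [trip]; ring

lemma exists_eq_single_of_degree_eq_one {V : Type} (d : V →₀ ℕ) (hd : d.degree = 1) :
    ∃ c, d = Finsupp.single c 1 := by
  classical
  have h0 : d ≠ 0 := by
    rintro rfl
    simp at hd
  obtain ⟨c, hc⟩ := Finsupp.ne_iff.mp h0
  have hle : Finsupp.single c 1 ≤ d := by
    intro c'
    by_cases h : c' = c
    · subst h
      simpa using Nat.one_le_iff_ne_zero.mpr hc
    · simp [Ne.symm h]
  obtain ⟨d', rfl⟩ := le_iff_exists_add.mp hle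
  refine ⟨c, ?_⟩
  simp only [map_add, Finsupp.degree_single] at hd
  rw [(Finsupp.degree_eq_zero_iff d').mp (by omega), add_zero]

/-- Every cubic vanishing on the two subspaces is a combination of the monomials `Mon Z`. -/
lemma mem_range_cubic [DecidableEq Z] {G : Matrix (Var Z) (Fin (n + 1)) ℂ}
    {H : Matrix (Fin (n + 1)) (Var Z) ℂ} (hGH : G * H = 1) (hHG : H * G = 1)
    {f : MvPolynomial (Fin (n + 1)) ℂ} (hf : f.IsHomogeneous 3)
    (hL : ∀ q, (∀ i, G.mulVec q (Sum.inl i) = 0) → evalAt q f = 0)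
    (hM : ∀ q, (∀ i, G.mulVec q (Sum.inr (Sum.inl i)) = 0) → evalAt q f = 0) :
    f ∈ LinearMap.range (cubic G) := by
  classical
  -- `f'` is `f` written in the adapted coordinates.
  let f' : MvPolynomial (Var Z) ℂ := aeval (fun i => ∑ c, C (H i c) * X c) f
  have hev : ∀ y, eval y f' = evalAt (H.mulVec y) f := by
    intro y
    have h : (aeval y : MvPolynomial (Var Z) ℂ →ₐ[ℂ] ℂ).comp
        (aeval fun i => ∑ c, C (H i c) * X c) = aeval (H.mulVec y) := by
      ext i
      simp [Matrix.mulVec, dotProduct]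
    exact congrArg (fun φ : MvPolynomial (Fin (n + 1)) ℂ →ₐ[ℂ] ℂ => φ f) h
  have hback : aeval (fun c => linForm (G c)) f' = f := by
    have h : (aeval (fun c => linForm (G c)) : MvPolynomial (Var Z) ℂ →ₐ[ℂ] _).comp
        (aeval fun i => ∑ c, C (H i c) * X c) = AlgHom.id ℂ _ := by
      ext1 i
      have h1 : ∀ j, ∑ c, H i c * G c j = (1 : Matrix _ _ ℂ) i j := fun j => by
        rw [← hHG, Matrix.mul_apply]
      simp only [AlgHom.comp_apply, aeval_X, map_sum, map_mul, aeval_C, algebraMap_eq, linForm,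
        Finset.mul_sum, AlgHom.id_apply]
      rw [Finset.sum_comm]
      simp only [← mul_assoc, ← C_mul, ← Finset.sum_mul, ← map_sum, h1]
      simp [Matrix.one_apply]
    exact congrArg (fun φ : MvPolynomial (Fin (n + 1)) ℂ →ₐ[ℂ] _ => φ f) h
  have hGHy : ∀ y, G.mulVec (H.mulVec y) = y := fun y => by
    rw [Matrix.mulVec_mulVec, hGH, Matrix.one_mulVec]
  have hhom : f'.IsHomogeneous 3 := by
    have h1 : ∀ i, (∑ c, C (H i c) * X c : MvPolynomial (Var Z) ℂ).IsHomogeneous 1 := fun i => by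
      refine IsHomogeneous.sum _ _ _ fun c _ => ?_
      simpa using (isHomogeneous_C _ (H i c)).mul (isHomogeneous_X ℂ c)
    have h2 : f'.IsHomogeneous (1 * 3) := hf.aeval _ h1
    rwa [one_mul] at h2
  have ha := exists_mem_support_ne_zero (Set.range Sum.inl) f' fun y hy => by
    rw [hev]
    exact hL _ fun i => by rw [hGHy]; exact hy _ ⟨i, rfl⟩
  have hb := exists_mem_support_ne_zero (Set.range fun j => Sum.inr (Sum.inl j)) f' fun y hy => by
    rw [hev]
    exact hM _ fun i => by rw [hGHy]; exact hy _ ⟨i, rfl⟩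
  rw [← hback, f'.as_sum, map_sum]
  refine Submodule.sum_mem _ fun d hd => ?_
  obtain ⟨_, ⟨i, rfl⟩, hi⟩ := ha d hd
  obtain ⟨_, ⟨j, rfl⟩, hj⟩ := hb d hd
  have hdeg : d.degree = 3 := by
    have := hhom (mem_support_iff.mp hd)
    rw [Finsupp.degree_eq_weight_one]
    exact this
  have hle : Finsupp.single (Sum.inl i) 1 + Finsupp.single (Sum.inr (Sum.inl j)) 1 ≤ d := by
    intro c
    by_cases hci : c = Sum.inl i
    · subst hci
      simpa using Nat.one_le_iff_ne_zero.mpr hi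
    · by_cases hcj : c = Sum.inr (Sum.inl j)
      · subst hcj
        simpa using Nat.one_le_iff_ne_zero.mpr hj
      · simp [Ne.symm hci, Ne.symm hcj]
  obtain ⟨d', rfl⟩ := le_iff_exists_add.mp hle
  have hd' : d'.degree = 1 := by
    simp only [map_add, Finsupp.degree_single] at hdeg
    omega
  obtain ⟨c, rfl⟩ := exists_eq_single_of_degree_eq_one d' hd'
  rw [aeval_monomial, ← Algebra.smul_def]
  refine Submodule.smul_mem _ _ ?_
  have h := mem_range_cubic_of_prod G i j c
  rwa [Finsupp.prod_add_index' (by simp) (by simp [pow_add]),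
    Finsupp.prod_add_index' (by simp) (by simp [pow_add]), Finsupp.prod_single_index (by simp),
    Finsupp.prod_single_index (by simp), Finsupp.prod_single_index (by simp), pow_one, pow_one,
    pow_one]

end Cubic

/-! ### From a bijective linear system to the geometry -/

/-- Coordinates on one of the two subspaces. -/
abbrev Col (Z : Type) : Type := Fin 3 ⊕ Z

/-- Indices of the conditions that define the space of cubics. -/
abbrev Cond (Z : Type) : Type := (Fin 3 × Col Z) ⊕ (Fin 3 × Col Z) ⊕ (Fin 2 × Var Z)

lemma card_cond {Z : Type} [Fintype Z] : Fintype.card (Cond Z ⊕ Var Z) = Fintype.card (Mon Z) := by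
  simp only [Fintype.card_sum, Fintype.card_prod, Fintype.card_fin]
  ring

section Geometry

variable {n : ℕ} {Z : Type} [Fintype Z] [DecidableEq Z]

/-- The arguments at which the polar form is to vanish. The indices in `Cond Z` stand for the
singularity at `l s`, `m s` and `p k'`, leaving out those derivatives that vanish anyway. The
remaining `n + 1` rows express that the Hessian at `p k` kills the direction `u`. By Euler's
relation one of these is redundant; it is replaced by an auxiliary condition that makes the system
square and, for a generic configuration, bijective. -/
def args (l m : Col Z → Var Z → ℂ) (p : Fin 2 → Var Z → ℂ) (k : Fin 2) (u : Var Z → ℂ) :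
    Cond Z ⊕ Var Z → (Var Z → ℂ) × (Var Z → ℂ) × (Var Z → ℂ)
  | Sum.inl (Sum.inl (i, s)) => (l s, l s, Pi.single (Sum.inl i) 1)
  | Sum.inl (Sum.inr (Sum.inl (j, s))) => (m s, m s, Pi.single (Sum.inr (Sum.inl j)) 1)
  | Sum.inl (Sum.inr (Sum.inr (k', c))) => (p k', p k', Pi.single c 1)
  | Sum.inr c => if c = Sum.inl 0 then
        (Pi.single (Sum.inl 0) 1 + Pi.single (Sum.inr (Sum.inl 0)) 1,
          Pi.single (Sum.inl 0) 1 + Pi.single (Sum.inr (Sum.inl 0)) 1, Pi.single (Sum.inl 1) 1)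
      else (p k, u, Pi.single c 1)

/-- The matrix of the linear system in the coefficients of a cubic given by `args`. -/
def sysMat (l m : Col Z → Var Z → ℂ) (p : Fin 2 → Var Z → ℂ) (k : Fin 2) (u : Var Z → ℂ) :
    Matrix (Cond Z ⊕ Var Z) (Mon Z) ℂ :=
  Matrix.of fun r J => perm3 (args l m p k u r).1 (args l m p k u r).2.1
    (args l m p k u r).2.2 (trip J)

lemma sysMat_mulVec (l m : Col Z → Var Z → ℂ) (p : Fin 2 → Var Z → ℂ) (k : Fin 2)
    (u : Var Z → ℂ) (e : Mon Z → ℂ) (r : Cond Z ⊕ Var Z) :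
    (sysMat l m p k u).mulVec e r = polar e (args l m p k u r).1 (args l m p k u r).2.1
      (args l m p k u r).2.2 := by
  simp only [sysMat, Matrix.mulVec, dotProduct, Matrix.of_apply, polar, mul_comm]

variable {G : Matrix (Var Z) (Fin (n + 1)) ℂ} {H : Matrix (Fin (n + 1)) (Var Z) ℂ}
  {A₀ A₁ : Matrix (Fin (n + 1)) (Fin (n - 2)) ℂ} {l m : Fin (n - 2) → Fin (n + 1) → ℂ}
  {p : Fin 2 → Fin (n + 1) → ℂ} {ε : Col Z ≃ Fin (n - 2)} {k : Fin 2} {u : Var Z → ℂ}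

lemma mem_singSpace_iff {S U : Set (Fin (n + 1) → ℂ)} {f : MvPolynomial (Fin (n + 1)) ℂ} :
    f ∈ SingSpace n 3 S U ↔
      f.IsHomogeneous 3 ∧ (∀ v ∈ U, evalAt v f = 0) ∧ ∀ q ∈ S, SingularAt f q := by
  simp [SingSpace, SingularAt, Submodule.mem_iInf, and_assoc, mem_homogeneousSubmodule]

/-- The space of cubics, in terms of coefficients with respect to the monomials `Mon Z`. -/
lemma mem_singSpace_iff_cond (hGH : G * H = 1) (hHG : H * G = 1)
    (hL : ∀ q, q ∈ Set.range A₀.mulVec ↔ ∀ i, G.mulVec q (Sum.inl i) = 0)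
    (hM : ∀ q, q ∈ Set.range A₁.mulVec ↔ ∀ i, G.mulVec q (Sum.inr (Sum.inl i)) = 0)
    (hl : ∀ s, l s ∈ Set.range A₀.mulVec) (hm : ∀ s, m s ∈ Set.range A₁.mulVec)
    (f : MvPolynomial (Fin (n + 1)) ℂ) :
    f ∈ SingSpace n 3 (Set.range l ∪ Set.range m ∪ Set.range p)
        (Set.range A₀.mulVec ∪ Set.range A₁.mulVec) ↔
      ∃ e, cubic G e = f ∧ ∀ r : Cond Z,
        (sysMat (fun s => G.mulVec (l (ε s))) (fun s => G.mulVec (m (ε s)))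
          (fun k => G.mulVec (p k)) k u).mulVec e (Sum.inl r) = 0 := by
  rw [mem_singSpace_iff]
  constructor
  · rintro ⟨hf, hU, hS⟩
    obtain ⟨e, rfl⟩ := mem_range_cubic hGH hHG hf
      (fun q hq => hU q (Or.inl ((hL q).mpr hq))) (fun q hq => hU q (Or.inr ((hM q).mpr hq)))
    refine ⟨e, rfl, fun r => ?_⟩
    rw [sysMat_mulVec]
    obtain ⟨i, s⟩ | ⟨j, s⟩ | ⟨k', c⟩ := r
    · exact (singularAt_cubic_iff hGH e _).mp (hS _ (Or.inl (Or.inl ⟨ε s, rfl⟩))) _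
    · exact (singularAt_cubic_iff hGH e _).mp (hS _ (Or.inl (Or.inr ⟨ε s, rfl⟩))) _
    · exact (singularAt_cubic_iff hGH e _).mp (hS _ (Or.inr ⟨k', rfl⟩)) _
  · rintro ⟨e, rfl, he⟩
    simp only [sysMat_mulVec] at he
    refine ⟨isHomogeneous_cubic G e, ?_, ?_⟩
    · rintro v (hv | hv)
      · exact evalAt_cubic_left G e v ((hL v).mp hv)
      · exact evalAt_cubic_right G e v ((hM v).mp hv)
    · rintro q ((⟨s, rfl⟩ | ⟨s, rfl⟩) | ⟨k', rfl⟩)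
      · rw [singularAt_cubic_iff hGH]
        refine polar_eq_zero_of_left e _ ((hL _).mp (hl s)) fun i => ?_
        simpa [args] using he (Sum.inl (i, ε.symm s))
      · rw [singularAt_cubic_iff hGH]
        refine polar_eq_zero_of_right e _ ((hM _).mp (hm s)) fun j => ?_
        simpa [args] using he (Sum.inr (Sum.inl (j, ε.symm s)))
      · rw [singularAt_cubic_iff hGH]
        intro w
        rw [polar_eq_sum]
        exact Finset.sum_eq_zero fun c _ =>
          mul_eq_zero_of_right _ (he (Sum.inr (Sum.inr (k', c))))

/-- Independence of the monomials follows from injectivity of the linear system: the rows of the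
system are values of the polar form, which depends only on the cubic. -/
lemma cubic_injective (hGH : G * H = 1) {l m : Col Z → Var Z → ℂ} {p : Fin 2 → Var Z → ℂ}
    (hbij : Function.Bijective (sysMat l m p k u).mulVec) : Function.Injective (cubic G) := by
  rw [injective_iff_map_eq_zero]
  intro e he
  have hsq : ∀ y w, polar e y y w = 0 := by
    intro y
    have h := (singularAt_cubic_iff hGH e (H.mulVec y)).mp (by
      intro i
      rw [he, map_zero])
    rwa [Matrix.mulVec_mulVec, hGH, Matrix.one_mulVec] at h
  have hall : ∀ x y w, polar e x y w = 0 := by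
    intro x y w
    have h1 := hsq (x + y) w
    rw [polar_add_sq, hsq x w, hsq y w] at h1
    linear_combination h1 / 2
  refine hbij.1 (funext fun r => ?_)
  rw [sysMat_mulVec, hall, Matrix.mulVec_zero, Pi.zero_apply]

lemma finrank_singSpace (hcard : Fintype.card (Var Z) = n + 1)
    (hGH : G * H = 1) (hHG : H * G = 1)
    (hL : ∀ q, q ∈ Set.range A₀.mulVec ↔ ∀ i, G.mulVec q (Sum.inl i) = 0)
    (hM : ∀ q, q ∈ Set.range A₁.mulVec ↔ ∀ i, G.mulVec q (Sum.inr (Sum.inl i)) = 0)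
    (hl : ∀ s, l s ∈ Set.range A₀.mulVec) (hm : ∀ s, m s ∈ Set.range A₁.mulVec)
    (hbij : Function.Bijective (sysMat (fun s => G.mulVec (l (ε s)))
      (fun s => G.mulVec (m (ε s))) (fun k => G.mulVec (p k)) k u).mulVec) :
    Module.finrank ℂ (SingSpace n 3 (Set.range l ∪ Set.range m ∪ Set.range p)
        (Set.range A₀.mulVec ∪ Set.range A₁.mulVec)) = n + 1 := by
  set M := sysMat (fun s => G.mulVec (l (ε s))) (fun s => G.mulVec (m (ε s)))
    (fun k => G.mulVec (p k)) k u with hMdef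
  let φ : (Mon Z → ℂ) →ₗ[ℂ] (Cond Z → ℂ) :=
    (LinearMap.funLeft ℂ ℂ Sum.inl).comp M.mulVecLin
  have hφ : ∀ e r, φ e r = M.mulVec e (Sum.inl r) := fun e r => rfl
  have hsurj : Function.Surjective φ := by
    intro v
    obtain ⟨e, he⟩ := hbij.2 (Sum.elim v 0)
    exact ⟨e, funext fun r => by rw [hφ, he, Sum.elim_inl]⟩
  have heq : SingSpace n 3 (Set.range l ∪ Set.range m ∪ Set.range p)
      (Set.range A₀.mulVec ∪ Set.range A₁.mulVec) = (LinearMap.ker φ).map (cubic G) := by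
    ext f
    rw [mem_singSpace_iff_cond (ε := ε) (k := k) (u := u) hGH hHG hL hM hl hm, Submodule.mem_map]
    refine exists_congr fun e => ?_
    rw [LinearMap.mem_ker, funext_iff, and_comm]
    rfl
  rw [heq, ← (Submodule.equivMapOfInjective (cubic G)
    (cubic_injective hGH hbij) (LinearMap.ker φ)).finrank_eq]
  have h1 := φ.finrank_range_add_finrank_ker
  have h2 : Fintype.card (Cond Z ⊕ Var Z) = Fintype.card (Cond Z) + Fintype.card (Var Z) :=
    Fintype.card_sum
  rw [LinearMap.range_eq_top.mpr hsurj, finrank_top, Module.finrank_fintype_fun_eq_card,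
    Module.finrank_fintype_fun_eq_card, ← card_cond, h2, hcard] at h1
  omega

/-- If the system is bijective, the common singular locus is a line near `p k`: the
equations `∂_u f = 0`, for the cubics `f` whose vectors `Hess f(p k) u` are dual to the coordinates
other than `c₀`, have invertible Jacobian at `p k` in these coordinates. -/
lemma locus_near (hGH : G * H = 1) (hHG : H * G = 1)
    (hL : ∀ q, q ∈ Set.range A₀.mulVec ↔ ∀ i, G.mulVec q (Sum.inl i) = 0)
    (hM : ∀ q, q ∈ Set.range A₁.mulVec ↔ ∀ i, G.mulVec q (Sum.inr (Sum.inl i)) = 0)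
    (hl : ∀ s, l s ∈ Set.range A₀.mulVec) (hm : ∀ s, m s ∈ Set.range A₁.mulVec)
    (hp : G.mulVec (p k) (Sum.inl 0) ≠ 0)
    (hbij : Function.Bijective (sysMat (fun s => G.mulVec (l (ε s)))
      (fun s => G.mulVec (m (ε s))) (fun k => G.mulVec (p k)) k u).mulVec) :
    ∃ δ > 0, ∀ q : Fin (n + 1) → ℂ,
      (∀ f ∈ SingSpace n 3 (Set.range l ∪ Set.range m ∪ Set.range p)
        (Set.range A₀.mulVec ∪ Set.range A₁.mulVec), SingularAt f q) →
      dist q (p k) < δ → ∃ c : ℂ, q = c • p k := by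
  set M := sysMat (fun s => G.mulVec (l (ε s))) (fun s => G.mulVec (m (ε s)))
    (fun k => G.mulVec (p k)) k u with hMdef
  set c₀ : Var Z := Sum.inl 0 with hc₀
  set P := G.mulVec (p k) with hP
  have hdual : ∀ c : Var Z, ∃ e, M.mulVec e =
      Sum.elim (0 : Cond Z → ℂ) (Pi.single c 1 : Var Z → ℂ) := fun c => hbij.2 _
  choose e he using hdual
  have heW : ∀ c, cubic G (e c) ∈ SingSpace n 3 (Set.range l ∪ Set.range m ∪ Set.range p)
        (Set.range A₀.mulVec ∪ Set.range A₁.mulVec) := fun c => by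
    rw [mem_singSpace_iff_cond (ε := ε) (k := k) (u := u) hGH hHG hL hM hl hm]
    exact ⟨e c, rfl, fun r => by rw [← hMdef, he]; rfl⟩
  have heP : ∀ c w, polar (e c) P P w = 0 := fun c =>
    (singularAt_cubic_iff hGH _ _).mp ((mem_singSpace_iff.mp (heW c)).2.2 _ (Or.inr ⟨k, rfl⟩))
  have heu : ∀ c c', c' ≠ c₀ →
      polar (e c) P u (Pi.single c' 1) = (Pi.single c 1 : Var Z → ℂ) c' := by
    intro c c' hc'
    have h := congrFun (he c) (Sum.inr c')
    rw [sysMat_mulVec] at h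
    have hc'' : c' ≠ Sum.inl 0 := hc'
    simpa only [args, if_neg hc'', Sum.elim_inr] using h
  -- The multiple of `P` that has the same `c₀`-coordinate as `G q`.
  let σ : (Fin (n + 1) → ℂ) → ℂ := fun q => G.mulVec q c₀ / P c₀
  -- The rows and columns other than `c₀` hold the averaged Jacobian of these equations between
  -- `G q` and `σ q • P`; the row and column of `c₀` only make the matrix square.
  let N : (Fin (n + 1) → ℂ) → Matrix (Var Z) (Var Z) ℂ := fun q => Matrix.of fun c c' =>
    if c = c₀ then (if c' = c₀ then 1 else 0)
    else if c' = c₀ then 0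
    else polar (e c) (G.mulVec q + σ q • P) u (Pi.single c' 1)
  have hNp : (N (p k)).det ≠ 0 := by
    have h1 : N (p k) = Matrix.diagonal fun c => if c = c₀ then 1 else 2 := by
      ext c c'
      have hσ : σ (p k) = 1 := div_self hp
      have h2 : G.mulVec (p k) + σ (p k) • P = (2 : ℂ) • P := by
        rw [hσ, ← hP, two_smul, one_smul]
      simp only [N, Matrix.of_apply, h2]
      by_cases hc : c = c₀
      · subst hc
        by_cases hc' : c' = c₀
        · simp [hc']
        · simp [hc', Ne.symm hc']
      · by_cases hc' : c' = c₀
        · simp [hc', hc]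
        · rw [if_neg hc, if_neg hc', polar_swap₁₂, polar_swap₂₃, polar_smul₃, polar_swap₂₃,
            polar_swap₁₂, heu c c' hc']
          by_cases hcc : c = c'
          · subst hcc
            simp [hc]
          · simp [hcc, Ne.symm hcc]
    rw [h1, Matrix.det_diagonal, Finset.prod_ne_zero_iff]
    intro c _
    split_ifs <;> norm_num
  have hcont : Continuous fun q => (N q).det := by
    have hG : Continuous fun q : Fin (n + 1) → ℂ => G.mulVec q := by fun_prop
    have hG' : ∀ c, Continuous fun q : Fin (n + 1) → ℂ => G.mulVec q c := fun c =>
      (continuous_apply c).comp hG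
    refine Continuous.matrix_det (continuous_matrix fun c c' => ?_)
    simp only [N, Matrix.of_apply, σ]
    split_ifs
    · exact continuous_const
    · exact continuous_const
    · exact continuous_const
    · simp only [polar, perm3, Pi.add_apply, Pi.smul_apply, smul_eq_mul]
      fun_prop
  have hev := hcont.continuousAt.eventually_ne hNp
  obtain ⟨δ, hδ, hball⟩ := Metric.eventually_nhds_iff.mp hev
  refine ⟨δ, hδ, fun q hq hqp => ⟨σ q, ?_⟩⟩
  have hker : (N q).mulVec (G.mulVec q - σ q • P) = 0 := by
    have hw0 : (G.mulVec q - σ q • P) c₀ = 0 := by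
      simp only [σ, Pi.sub_apply, Pi.smul_apply, smul_eq_mul]
      rw [div_mul_cancel₀ _ hp, sub_self]
    ext c
    by_cases hc : c = c₀
    · simp only [N, Matrix.mulVec, dotProduct, Matrix.of_apply, hc, if_true, ite_mul, one_mul,
        zero_mul, Finset.sum_ite_eq', Finset.mem_univ]
      exact hw0
    · have h1 : polar (e c) (G.mulVec q + σ q • P) u (G.mulVec q - σ q • P) = 0 := by
        rw [polar_sub_sq, (singularAt_cubic_iff hGH _ _).mp (hq _ (heW c)) u, polar_smul_smul, heP]
        ring
      rw [polar_eq_sum] at h1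
      rw [Pi.zero_apply, ← h1]
      refine Finset.sum_congr rfl fun c' _ => ?_
      by_cases hc' : c' = c₀
      · rw [hc', hw0, mul_zero, zero_mul]
      · simp only [N, Matrix.of_apply, if_neg hc, if_neg hc']
        ring
  have h0 := Matrix.eq_zero_of_mulVec_eq_zero (hball hqp) hker
  have h1 : G.mulVec q = G.mulVec (σ q • p k) := by
    rw [Matrix.mulVec_smul]
    exact sub_eq_zero.mp h0
  have h2 := congrArg H.mulVec h1
  rwa [Matrix.mulVec_mulVec, Matrix.mulVec_mulVec, hHG, Matrix.one_mulVec,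
    Matrix.one_mulVec] at h2

end Geometry

/-! ### Equations of the subspaces that are polynomial in the parameters -/

section Frame

variable {n : ℕ} {Z : Type} [Fintype Z] [DecidableEq Z]

/-- The coordinates vanishing on the `k`-th coordinate subspace. -/
def offV : Fin 2 → Fin 3 → Var Z
  | 0, i => Sum.inl i
  | 1, i => Sum.inr (Sum.inl i)

/-- The coordinates that restrict to coordinates on the `k`-th coordinate subspace. -/
def onV : Fin 2 → Col Z → Var Z
  | 0, Sum.inl j => Sum.inr (Sum.inl j)
  | 0, Sum.inr z => Sum.inr (Sum.inr z)
  | 1, Sum.inl i => Sum.inl i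
  | 1, Sum.inr z => Sum.inr (Sum.inr z)

omit [Fintype Z] [DecidableEq Z] in
lemma onV_injective (k : Fin 2) : Function.Injective (onV (Z := Z) k) := by
  intro s s' h
  fin_cases k <;> rcases s with s | s <;> rcases s' with s' | s' <;> simp_all [onV]

omit [Fintype Z] [DecidableEq Z] in
lemma offV_ne_onV (k : Fin 2) (i : Fin 3) (s : Col Z) : offV k i ≠ onV k s := by
  fin_cases k <;> rcases s with s | s <;> simp [onV, offV]

omit [Fintype Z] [DecidableEq Z] in
lemma eq_offV_or_eq_onV (k : Fin 2) (c : Var Z) :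
    (∃ i, c = offV k i) ∨ ∃ s, c = onV k s := by
  fin_cases k <;> rcases c with i | j | z
  · exact Or.inl ⟨i, rfl⟩
  · exact Or.inr ⟨Sum.inl j, rfl⟩
  · exact Or.inr ⟨Sum.inr z, rfl⟩
  · exact Or.inr ⟨Sum.inl i, rfl⟩
  · exact Or.inl ⟨j, rfl⟩
  · exact Or.inr ⟨Sum.inr z, rfl⟩

variable (κ : Var Z ≃ Fin (n + 1)) (ε : Col Z ≃ Fin (n - 2))

/-- The square block of a parametrizing matrix in the rows `onV k`. -/
def topBlock (k : Fin 2) (A : Matrix (Fin (n + 1)) (Fin (n - 2)) ℂ) :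
    Matrix (Col Z) (Col Z) ℂ :=
  A.submatrix (fun s => κ (onV k s)) ε

/-- The remaining three rows of a parametrizing matrix. -/
def lowBlock (k : Fin 2) (A : Matrix (Fin (n + 1)) (Fin (n - 2)) ℂ) :
    Matrix (Fin 3) (Col Z) ℂ :=
  A.submatrix (fun i => κ (offV k i)) ε

/-- With `B` the square block and `C` the other rows of `A`, the three linear forms
`det B • x - C * adj B • y` vanish on the column span of `A`. By Cramer's rule they are polynomial
in the entries of `A`. -/
def form (k : Fin 2) (A : Matrix (Fin (n + 1)) (Fin (n - 2)) ℂ) (i : Fin 3) :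
    Fin (n + 1) → ℂ := fun x =>
  (topBlock κ ε k A).det * (Pi.single (κ (offV k i)) 1 : Fin (n + 1) → ℂ) x -
    ∑ s, (lowBlock κ ε k A * (topBlock κ ε k A).adjugate) i s *
      (Pi.single (κ (onV k s)) 1 : Fin (n + 1) → ℂ) x

lemma form_dotProduct (k : Fin 2) (A : Matrix (Fin (n + 1)) (Fin (n - 2)) ℂ) (i : Fin 3)
    (q : Fin (n + 1) → ℂ) :
    form κ ε k A i ⬝ᵥ q = (topBlock κ ε k A).det * q (κ (offV k i)) -
      (lowBlock κ ε k A * (topBlock κ ε k A).adjugate).mulVec (fun s => q (κ (onV k s))) i := by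
  simp only [form, dotProduct, sub_mul, Finset.sum_sub_distrib, Finset.sum_mul, mul_assoc,
    Matrix.mulVec]
  rw [Finset.sum_comm]
  simp only [← Finset.mul_sum]
  simp [Pi.single_apply]

omit [DecidableEq Z] in
lemma topBlock_mulVec (k : Fin 2) (A : Matrix (Fin (n + 1)) (Fin (n - 2)) ℂ)
    (y : Fin (n - 2) → ℂ) :
    (topBlock κ ε k A).mulVec (y ∘ ε) = fun s => A.mulVec y (κ (onV k s)) := by
  ext s
  simp only [topBlock, Matrix.mulVec, dotProduct, Matrix.submatrix_apply, Function.comp]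
  exact ε.sum_comp fun j => A (κ (onV k s)) j * y j

omit [DecidableEq Z] in
lemma lowBlock_mulVec (k : Fin 2) (A : Matrix (Fin (n + 1)) (Fin (n - 2)) ℂ)
    (y : Fin (n - 2) → ℂ) :
    (lowBlock κ ε k A).mulVec (y ∘ ε) = fun i => A.mulVec y (κ (offV k i)) := by
  ext s
  simp only [lowBlock, Matrix.mulVec, dotProduct, Matrix.submatrix_apply, Function.comp]
  exact ε.sum_comp fun j => A (κ (offV k s)) j * y j

lemma mulVec_injective {k : Fin 2} {A : Matrix (Fin (n + 1)) (Fin (n - 2)) ℂ}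
    (hA : (topBlock κ ε k A).det ≠ 0) : Function.Injective A.mulVec := by
  intro y y' h
  have h1 : (topBlock κ ε k A).mulVec (y ∘ ε) = (topBlock κ ε k A).mulVec (y' ∘ ε) := by
    rw [topBlock_mulVec, topBlock_mulVec, h]
  have h2 := Matrix.mulVec_injective_iff_isUnit.mpr
    ((Matrix.isUnit_iff_isUnit_det _).mpr hA.isUnit) h1
  ext j
  simpa using congrFun h2 (ε.symm j)

lemma mem_range_mulVec_iff {k : Fin 2} {A : Matrix (Fin (n + 1)) (Fin (n - 2)) ℂ}
    (hA : (topBlock κ ε k A).det ≠ 0) (q : Fin (n + 1) → ℂ) :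
    q ∈ Set.range A.mulVec ↔ ∀ i, form κ ε k A i ⬝ᵥ q = 0 := by
  simp only [form_dotProduct]
  set B := topBlock κ ε k A with hB
  set C := lowBlock κ ε k A with hC
  constructor
  · rintro ⟨y, rfl⟩ i
    rw [← topBlock_mulVec, ← hB, Matrix.mulVec_mulVec, Matrix.mul_assoc, Matrix.adjugate_mul,
      ← congrFun (lowBlock_mulVec κ ε k A y) i, ← hC]
    simp [Matrix.smul_mulVec]
  · intro h
    set v : Col Z → ℂ := B.det⁻¹ • B.adjugate.mulVec (fun s => q (κ (onV k s))) with hv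
    have hve : (v ∘ ε.symm) ∘ ε = v := by
      ext s
      simp
    refine ⟨v ∘ ε.symm, ?_⟩
    ext x
    obtain ⟨c, rfl⟩ := κ.surjective x
    obtain ⟨i, rfl⟩ | ⟨s, rfl⟩ := eq_offV_or_eq_onV k c
    · rw [← congrFun (lowBlock_mulVec κ ε k A _) i, hve, ← hC, hv, Matrix.mulVec_smul,
        Matrix.mulVec_mulVec, Pi.smul_apply, smul_eq_mul, ← sub_eq_zero.mp (h i), ← mul_assoc,
        inv_mul_cancel₀ hA, one_mul]
    · rw [← congrFun (topBlock_mulVec κ ε k A _) s, hve, ← hB, hv, Matrix.mulVec_smul,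
        Matrix.mulVec_mulVec, Matrix.mul_adjugate]
      simp [Matrix.smul_mulVec, inv_mul_cancel_left₀ hA]

/-- Coordinates adapted to the two column spans, polynomial in the parametrizing matrices. -/
def frame (A : Fin 2 → Matrix (Fin (n + 1)) (Fin (n - 2)) ℂ) :
    Matrix (Var Z) (Fin (n + 1)) ℂ
  | Sum.inl i => form κ ε 0 (A 0) i
  | Sum.inr (Sum.inl j) => form κ ε 1 (A 1) j
  | Sum.inr (Sum.inr z) => Pi.single (κ (Sum.inr (Sum.inr z))) 1

lemma frame_inverse {A : Fin 2 → Matrix (Fin (n + 1)) (Fin (n - 2)) ℂ}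
    (h : ((frame κ ε A).submatrix id κ).det ≠ 0) :
    ∃ H : Matrix (Fin (n + 1)) (Var Z) ℂ, frame κ ε A * H = 1 ∧ H * frame κ ε A = 1 := by
  set G := (frame κ ε A).submatrix id κ with hG
  have hG' : frame κ ε A = G.submatrix id κ.symm := by
    ext c x
    simp [hG]
  refine ⟨G⁻¹.submatrix κ.symm id, ?_, ?_⟩
  · rw [hG', Matrix.submatrix_mul_equiv, Matrix.mul_nonsing_inv _ h.isUnit, Matrix.submatrix_id_id]
  · have := Matrix.submatrix_mul_equiv G⁻¹ G κ.symm (Equiv.refl _) κ.symm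
    rw [hG']
    refine this.trans ?_
    rw [Matrix.nonsing_inv_mul _ h.isUnit, Matrix.submatrix_one_equiv]

lemma polyFun_form {T : Type} {k : Fin 2}
    {A : (T → ℂ) → Matrix (Fin (n + 1)) (Fin (n - 2)) ℂ}
    (hA : ∀ i j, PolyFun fun t => A t i j) (i : Fin 3) (x : Fin (n + 1)) :
    PolyFun fun t => form κ ε k (A t) i x := by
  have hB : ∀ s s', PolyFun fun t => topBlock κ ε k (A t) s s' := fun s s' => hA _ _
  have hC : ∀ s s', PolyFun fun t => lowBlock κ ε k (A t) s s' := fun s s' => hA _ _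
  refine ((PolyFun.det hB).mul (.const _)).sub (PolyFun.sum _ fun s => ?_)
  exact (PolyFun.matrix_mul hC (PolyFun.adjugate hB) i s).mul (.const _)

lemma polyFun_frame {T : Type}
    {A : (T → ℂ) → Fin 2 → Matrix (Fin (n + 1)) (Fin (n - 2)) ℂ}
    (hA : ∀ k i j, PolyFun fun t => A t k i j) (c : Var Z) (x : Fin (n + 1)) :
    PolyFun fun t => frame κ ε (A t) c x := by
  rcases c with i | j | z
  · exact polyFun_form κ ε (hA 0) i x
  · exact polyFun_form κ ε (hA 1) j x
  · exact .const _

omit [Fintype Z] [DecidableEq Z] in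
lemma polyFun_perm3 {T : Type} (x y w : (T → ℂ) → Var Z → ℂ) (hx : ∀ c, PolyFun fun t => x t c)
    (hy : ∀ c, PolyFun fun t => y t c) (hw : ∀ c, PolyFun fun t => w t c)
    (d : Var Z × Var Z × Var Z) : PolyFun fun t => perm3 (x t) (y t) (w t) d := by
  have h : ∀ a b c, PolyFun fun t => x t a * y t b * w t c := fun a b c =>
    ((hx a).mul (hy b)).mul (hw c)
  unfold perm3
  exact (((((h _ _ _).add (h _ _ _)).add (h _ _ _)).add (h _ _ _)).add (h _ _ _)).add (h _ _ _)

omit [Fintype Z] in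
lemma polyFun_sysMat {T : Type} {l m : (T → ℂ) → Col Z → Var Z → ℂ}
    {p : (T → ℂ) → Fin 2 → Var Z → ℂ} (k : Fin 2) (u : Var Z → ℂ)
    (hl : ∀ s c, PolyFun fun t => l t s c) (hm : ∀ s c, PolyFun fun t => m t s c)
    (hp : ∀ s c, PolyFun fun t => p t s c) (r : Cond Z ⊕ Var Z) (J : Mon Z) :
    PolyFun fun t => sysMat (l t) (m t) (p t) k u r J := by
  simp only [sysMat, Matrix.of_apply]
  refine polyFun_perm3 (fun t => (args (l t) (m t) (p t) k u r).1)
    (fun t => (args (l t) (m t) (p t) k u r).2.1) (fun t => (args (l t) (m t) (p t) k u r).2.2)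
    ?_ ?_ ?_ _
  all_goals
    intro c
    obtain (⟨i, s⟩ | ⟨j, s⟩ | ⟨k', c'⟩) | c' := r <;> simp only [args]
    all_goals first
      | exact hl _ _
      | exact hm _ _
      | exact hp _ _
      | exact .const _
      | split_ifs
    all_goals first
      | exact hp _ _
      | exact .const _

end Frame

/-! ### Reduction to a single configuration -/

section Config

variable {n : ℕ} {Z : Type} [Fintype Z] [DecidableEq Z]

/-- The parameters of a configuration. -/
abbrev Par (n : ℕ) : Type :=
  (Fin 2 × Fin (n + 1) × Fin (n - 2)) ⊕ (Fin 2 × Fin (n - 2) × Fin (n - 2)) ⊕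
    (Fin 2 × Fin (n + 1))

/-- The matrices parametrizing the two subspaces. -/
def parA (t : Par n → ℂ) (k : Fin 2) : Matrix (Fin (n + 1)) (Fin (n - 2)) ℂ :=
  Matrix.of fun i j => t (Sum.inl (k, i, j))

/-- The points on the two subspaces. -/
def parPt (t : Par n → ℂ) (k : Fin 2) (s : Fin (n - 2)) : Fin (n + 1) → ℂ :=
  (parA t k).mulVec fun j => t (Sum.inr (Sum.inl (k, s, j)))

/-- The two ambient points. -/
def parP (t : Par n → ℂ) (k : Fin 2) : Fin (n + 1) → ℂ := fun i => t (Sum.inr (Sum.inr (k, i)))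

variable (κ : Var Z ≃ Fin (n + 1)) (ε : Col Z ≃ Fin (n - 2))

/-- The parameter of the configuration of the two coordinate subspaces `{a = 0}` and `{b = 0}`
with the points `l s`, `m s` and `p k`. -/
def basePar (l m : Col Z → Var Z → ℂ) (p : Fin 2 → Var Z → ℂ) : Par n → ℂ
  | Sum.inl (k, i, j) => if κ.symm i = onV k (ε.symm j) then 1 else 0
  | Sum.inr (Sum.inl (k, s, j)) => (![l, m] k) (ε.symm s) (onV k (ε.symm j))
  | Sum.inr (Sum.inr (k, i)) => p k (κ.symm i)

lemma frame_basePar (l m : Col Z → Var Z → ℂ) (p : Fin 2 → Var Z → ℂ) (q : Fin (n + 1) → ℂ) :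
    (frame κ ε (parA (basePar κ ε l m p))).mulVec q = q ∘ κ := by
  have hB : ∀ k, topBlock κ ε k (parA (basePar κ ε l m p) k) = 1 := by
    intro k
    ext s s'
    simp [topBlock, parA, basePar, Matrix.one_apply, (onV_injective k).eq_iff]
  have hC : ∀ k, lowBlock κ ε k (parA (basePar κ ε l m p) k) = 0 := by
    intro k
    ext s s'
    simp [lowBlock, parA, basePar, offV_ne_onV]
  have hform : ∀ k i, form κ ε k (parA (basePar κ ε l m p) k) i ⬝ᵥ q = q (κ (offV k i)) := by
    intro k i
    rw [form_dotProduct, hB, hC]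
    simp
  ext c
  rcases c with i | j | z
  · exact hform 0 i
  · exact hform 1 j
  · simp [frame, Matrix.mulVec]

omit [Fintype Z] in
lemma topBlock_basePar (l m : Col Z → Var Z → ℂ) (p : Fin 2 → Var Z → ℂ) (k : Fin 2) :
    topBlock κ ε k (parA (basePar κ ε l m p) k) = 1 := by
  ext s s'
  simp [topBlock, parA, basePar, Matrix.one_apply, (onV_injective k).eq_iff]

omit [Fintype Z] in
lemma parPt_basePar (l m : Col Z → Var Z → ℂ) (p : Fin 2 → Var Z → ℂ) (k : Fin 2) (s : Col Z)
    (h : ∀ i, ![l, m] k s (offV k i) = 0) :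
    parPt (basePar κ ε l m p) k (ε s) ∘ κ = ![l, m] k s := by
  ext c
  simp only [parPt, parA, Matrix.mulVec, dotProduct, Matrix.of_apply, basePar, Function.comp,
    Equiv.symm_apply_apply, ite_mul, one_mul, zero_mul]
  obtain ⟨i, rfl⟩ | ⟨s', rfl⟩ := eq_offV_or_eq_onV k c
  · rw [h]
    exact Finset.sum_eq_zero fun j _ => if_neg (offV_ne_onV k i _)
  · rw [Finset.sum_eq_single (ε s')]
    · simp
    · intro j _ hj
      refine if_neg fun h' => hj ?_
      rw [onV_injective k h', Equiv.apply_symm_apply]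
    · simp

/-- If the linear system has only the zero solution for one configuration of points on the
coordinate subspaces, then it is bijective for a generic configuration. -/
lemma generic_of_base (k : Fin 2) {l m : Col Z → Var Z → ℂ} {p : Fin 2 → Var Z → ℂ}
    {u : Var Z → ℂ} (hl : ∀ s i, l s (Sum.inl i) = 0)
    (hm : ∀ s i, m s (Sum.inr (Sum.inl i)) = 0) (hp : p k (Sum.inl 0) ≠ 0)
    (hker : ∀ e, (sysMat l m p k u).mulVec e = 0 → e = 0) :
    Generic fun t : Par n → ℂ =>
      (∀ k, (topBlock κ ε k (parA t k)).det ≠ 0) ∧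
      ((frame κ ε (parA t)).submatrix id κ).det ≠ 0 ∧
      (frame κ ε (parA t)).mulVec (parP t k) (Sum.inl 0) ≠ 0 ∧
      Function.Bijective (sysMat (fun s => (frame κ ε (parA t)).mulVec (parPt t 0 (ε s)))
        (fun s => (frame κ ε (parA t)).mulVec (parPt t 1 (ε s)))
        (fun k => (frame κ ε (parA t)).mulVec (parP t k)) k u).mulVec := by
  have hA : ∀ k i j, PolyFun fun t : Par n → ℂ => parA t k i j := fun k i j => .coord _
  have hB : ∀ k s s', PolyFun fun t : Par n → ℂ => topBlock κ ε k (parA t k) s s' :=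
    fun k s s' => hA _ _ _
  have hG : ∀ c x, PolyFun fun t : Par n → ℂ => frame κ ε (parA t) c x := polyFun_frame κ ε hA
  have hpt : ∀ k s c, PolyFun fun t : Par n → ℂ =>
      (frame κ ε (parA t)).mulVec (parPt t k (ε s)) c := fun k s =>
    PolyFun.mulVec hG (PolyFun.mulVec (hA k) fun j => .coord _)
  have hpp : ∀ k c, PolyFun fun t : Par n → ℂ =>
      (frame κ ε (parA t)).mulVec (parP t k) c := fun k => PolyFun.mulVec hG fun j => .coord _
  set t₀ : Par n → ℂ := basePar κ ε l m p with ht₀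
  have hB₀ : ∀ k, (topBlock κ ε k (parA t₀ k)).det ≠ 0 := fun k => by
    rw [topBlock_basePar, Matrix.det_one]
    exact one_ne_zero
  have hP₀ : ∀ k, (frame κ ε (parA t₀)).mulVec (parP t₀ k) = p k := fun k => by
    rw [frame_basePar]
    ext c
    simp [parP, ht₀, basePar]
  have h₁ : Generic fun t : Par n → ℂ => ∀ k, (topBlock κ ε k (parA t k)).det ≠ 0 := by
    refine (((PolyFun.det (hB 0)).generic_ne_zero (hB₀ 0)).and
      ((PolyFun.det (hB 1)).generic_ne_zero (hB₀ 1))).mono fun t ht k => ?_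
    fin_cases k
    exacts [ht.1, ht.2]
  refine h₁.and (Generic.and ?_ (Generic.and ?_ ?_))
  · refine (PolyFun.det (M := fun t : Par n → ℂ => (frame κ ε (parA t)).submatrix id κ)
      fun c x => hG c (κ x)).generic_ne_zero (t₀ := t₀) ?_
    have : (frame κ ε (parA t₀)).submatrix id κ = 1 := by
      ext c c'
      have h := congrFun (frame_basePar κ ε l m p (Pi.single (κ c') 1)) c
      rw [Matrix.mulVec_single_one] at h
      simpa [Pi.single_apply, Matrix.one_apply] using h
    rw [this, Matrix.det_one]
    exact one_ne_zero
  · refine (hpp k (Sum.inl 0)).generic_ne_zero (t₀ := t₀) ?_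
    rwa [hP₀]
  · refine generic_bijective (t₀ := t₀)
      (polyFun_sysMat k u (hpt 0) (hpt 1) hpp) card_cond fun e he => hker e ?_
    have h0 : (fun s => (frame κ ε (parA t₀)).mulVec (parPt t₀ 0 (ε s))) = l := funext fun s => by
      rw [frame_basePar]
      exact parPt_basePar κ ε l m p 0 s (hl s)
    have h1 : (fun s => (frame κ ε (parA t₀)).mulVec (parPt t₀ 1 (ε s))) = m := funext fun s => by
      rw [frame_basePar]
      exact parPt_basePar κ ε l m p 1 s (hm s)
    rwa [h0, h1, funext hP₀] at he

end Config

/-! ### The equations in coordinates -/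

section Rows

variable {Z : Type} [Fintype Z] [DecidableEq Z]

omit [DecidableEq Z] in
lemma polar_expand (e : Mon Z → ℂ) (x y w : Var Z → ℂ) :
    polar e x y w = ∑ i, ∑ j, (e (i, j, Sum.inl 0) * perm3 x y w (trip (i, j, Sum.inl 0)) +
      e (i, j, Sum.inl 1) * perm3 x y w (trip (i, j, Sum.inl 1)) +
      e (i, j, Sum.inl 2) * perm3 x y w (trip (i, j, Sum.inl 2)) +
      e (i, j, Sum.inl 3) * perm3 x y w (trip (i, j, Sum.inl 3)) +
      ∑ z, e (i, j, Sum.inr z) * perm3 x y w (trip (i, j, Sum.inr z))) := by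
  simp only [polar, Fintype.sum_prod_type, Fintype.sum_sum_type, Fin.sum_univ_four]

lemma polar_single_a (e : Mon Z → ℂ) (x y : Var Z → ℂ) (i : Fin 3) :
    polar e x y (Pi.single (Sum.inl i) 1) = ∑ j,
      (2 * e (i, j, Sum.inl 0) * (x (Sum.inl i) * y (Sum.inr (Sum.inl j)) +
          x (Sum.inr (Sum.inl j)) * y (Sum.inl i)) +
        e (i + 2, j, Sum.inl 1) * (x (Sum.inl (i + 1)) * y (Sum.inr (Sum.inl j)) +
          x (Sum.inr (Sum.inl j)) * y (Sum.inl (i + 1))) +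
        e (i + 1, j, Sum.inl 1) * (x (Sum.inl (i + 2)) * y (Sum.inr (Sum.inl j)) +
          x (Sum.inr (Sum.inl j)) * y (Sum.inl (i + 2))) +
        2 * e (i, j, Sum.inl 2) * (x (Sum.inr (Sum.inl j)) * y (Sum.inr (Sum.inl j))) +
        e (i, j, Sum.inl 3) * (x (Sum.inr (Sum.inl (j + 1))) * y (Sum.inr (Sum.inl (j + 2))) +
          x (Sum.inr (Sum.inl (j + 2))) * y (Sum.inr (Sum.inl (j + 1)))) +
        ∑ z, e (i, j, Sum.inr z) * (x (Sum.inr (Sum.inr z)) * y (Sum.inr (Sum.inl j)) +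
          x (Sum.inr (Sum.inl j)) * y (Sum.inr (Sum.inr z)))) := by
  rw [polar_expand, Finset.sum_comm]
  refine Finset.sum_congr rfl fun j _ => ?_
  have h3 : (1 : Fin 3) + 2 = 0 := rfl
  have h4 : (2 : Fin 3) + 2 = 1 := rfl
  have h5 : (2 : Fin 3) + 1 = 0 := rfl
  have h6 : (1 : Fin 3) + 1 = 2 := rfl
  fin_cases i <;>
    simp [Fin.sum_univ_three, perm3, trip, Pi.single_apply, h3, h4, h5, h6] <;> ring_nf

lemma polar_single_b (e : Mon Z → ℂ) (x y : Var Z → ℂ) (j : Fin 3) :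
    polar e x y (Pi.single (Sum.inr (Sum.inl j)) 1) = ∑ i,
      (2 * e (i, j, Sum.inl 0) * (x (Sum.inl i) * y (Sum.inl i)) +
        e (i, j, Sum.inl 1) * (x (Sum.inl (i + 1)) * y (Sum.inl (i + 2)) +
          x (Sum.inl (i + 2)) * y (Sum.inl (i + 1))) +
        2 * e (i, j, Sum.inl 2) * (x (Sum.inl i) * y (Sum.inr (Sum.inl j)) +
          x (Sum.inr (Sum.inl j)) * y (Sum.inl i)) +
        e (i, j + 2, Sum.inl 3) * (x (Sum.inl i) * y (Sum.inr (Sum.inl (j + 1))) +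
          x (Sum.inr (Sum.inl (j + 1))) * y (Sum.inl i)) +
        e (i, j + 1, Sum.inl 3) * (x (Sum.inl i) * y (Sum.inr (Sum.inl (j + 2))) +
          x (Sum.inr (Sum.inl (j + 2))) * y (Sum.inl i)) +
        ∑ z, e (i, j, Sum.inr z) * (x (Sum.inr (Sum.inr z)) * y (Sum.inl i) +
          x (Sum.inl i) * y (Sum.inr (Sum.inr z)))) := by
  rw [polar_expand]
  refine Finset.sum_congr rfl fun i _ => ?_
  have h3 : (1 : Fin 3) + 2 = 0 := rfl
  have h4 : (2 : Fin 3) + 2 = 1 := rfl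
  have h5 : (2 : Fin 3) + 1 = 0 := rfl
  have h6 : (1 : Fin 3) + 1 = 2 := rfl
  fin_cases j <;>
    simp [Fin.sum_univ_three, perm3, trip, Pi.single_apply, h3, h4, h5, h6] <;> ring_nf

lemma polar_single_z (e : Mon Z → ℂ) (x y : Var Z → ℂ) (z : Z) :
    polar e x y (Pi.single (Sum.inr (Sum.inr z)) 1) = ∑ i, ∑ j, e (i, j, Sum.inr z) *
      (x (Sum.inl i) * y (Sum.inr (Sum.inl j)) + x (Sum.inr (Sum.inl j)) * y (Sum.inl i)) := by
  rw [polar_expand]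
  refine Finset.sum_congr rfl fun i _ => Finset.sum_congr rfl fun j _ => ?_
  simp [perm3, trip, Pi.single_apply, Finset.sum_add_distrib, mul_add]

end Rows

/-! ### A sparse configuration -/

section Base

/-- The point with coordinates `a`, `b` and `z`. -/
def mk {Z : Type} (a b : Fin 3 → ℂ) (z : Z → ℂ) : Var Z → ℂ := Sum.elim a (Sum.elim b z)

section mk

variable {Z : Type} (a b : Fin 3 → ℂ) (z : Z → ℂ)

@[simp] lemma mk_a (i : Fin 3) : mk a b z (Sum.inl i) = a i := rfl

@[simp] lemma mk_b (j : Fin 3) : mk a b z (Sum.inr (Sum.inl j)) = b j := rfl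

@[simp] lemma mk_z (k : Z) : mk a b z (Sum.inr (Sum.inr k)) = z k := rfl

end mk

variable {r s : ℕ}

/-- The index set of the coordinates `z`: `r` pairs and `s` single indices, with `s ≤ 1` in use. -/
abbrev Idx (r s : ℕ) : Type := (Fin r × Fin 2) ⊕ Fin s

/-- Points on the subspace `{a = 0}`: the three unit vectors of the `b`-space, and for every
coordinate `z` a point with `b`-part of support at most two. -/
def baseL : Col (Idx r s) → Var (Idx r s) → ℂ
  | Sum.inl j => mk 0 (Pi.single j 1) 0
  | Sum.inr (Sum.inl (q, 0)) => mk 0 ![1, 0, 0] (Pi.single (Sum.inl (q, 0)) 1)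
  | Sum.inr (Sum.inl (q, 1)) => mk 0 ![0, 1, 0] (Pi.single (Sum.inl (q, 1)) 1)
  | Sum.inr (Sum.inr o) => mk 0 ![1, 0, 1] (Pi.single (Sum.inr o) 1)

/-- Points on the subspace `{b = 0}`. The two points of a pair involve both coordinates `z` of
the pair; this couples the coefficients within a pair only. -/
def baseM : Col (Idx r s) → Var (Idx r s) → ℂ
  | Sum.inl i => mk (Pi.single i 1) 0 0
  | Sum.inr (Sum.inl (q, 0)) =>
      mk ![1, 0, 0] 0 (Pi.single (Sum.inl (q, 0)) 1 + Pi.single (Sum.inl (q, 1)) 1)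
  | Sum.inr (Sum.inl (q, 1)) =>
      mk ![0, 1, 0] 0 (Pi.single (Sum.inl (q, 0)) 1 - Pi.single (Sum.inl (q, 1)) 1)
  | Sum.inr (Sum.inr o) => mk ![0, 1, 1] 0 (Pi.single (Sum.inr o) 1)

/-- The two ambient points. The first of them is put at the index `k`, where the Hessian is
taken. -/
def baseP (k k' : Fin 2) : Var (Idx r s) → ℂ :=
  if k' = k then mk ![1, 1, 0] ![0, 2, -1] 0 else mk ![0, 2, 1] ![-1, 1, 0] 0

/-- The direction in which Hessians are taken. -/
def baseU : Var (Idx r s) → ℂ := mk ![0, 0, 1] ![1, -1, 0] (Sum.elim 0 1)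

/-- The square linear system of the sparse configuration has only the zero solution. The conditions
at the unit vectors remove the monomials `a b²` and `a² b`. The coefficients of `a z b` vanish for
the `z` in pairs, one pair at a time. What is left is a fixed system in the coefficients of
`a a' b`, `a b b'` and, if `s = 1`, of `a z b` for the single `z`. -/
lemma base_ker (hs : s ≤ 1) (k : Fin 2) (e : Mon (Idx r s) → ℂ)
    (he : (sysMat baseL baseM (baseP k) k baseU).mulVec e = 0) : e = 0 := by
  have h : ∀ x, polar e (args baseL baseM (baseP k) k baseU x).1
      (args baseL baseM (baseP k) k baseU x).2.1
      (args baseL baseM (baseP k) k baseU x).2.2 = 0 := fun x => by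
    rw [← sysMat_mulVec, he, Pi.zero_apply]
  -- Coefficients of `a b²` and `a² b`, from the unit vectors of the `b`-space and the `a`-space.
  have hβ : ∀ i j, e (i, j, Sum.inl 2) = 0 := by
    intro i j
    have := h (Sum.inl (Sum.inl (i, Sum.inl j)))
    simp only [args, baseL, polar_single_a] at this
    fin_cases j <;> simpa [Fin.sum_univ_three] using this
  have hα : ∀ i j, e (i, j, Sum.inl 0) = 0 := by
    intro i j
    have := h (Sum.inl (Sum.inr (Sum.inl (j, Sum.inl i))))
    simp only [args, baseM, polar_single_b] at this
    fin_cases i <;> simpa [Fin.sum_univ_three] using this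
  -- The remaining points on the two subspaces.
  have hL0 : ∀ q i, e (i, 0, Sum.inr (Sum.inl (q, 0))) = 0 := by
    intro q i
    have := h (Sum.inl (Sum.inl (i, Sum.inr (Sum.inl (q, 0)))))
    simp only [args, baseL, polar_single_a] at this
    simpa [Fin.sum_univ_three, hα, hβ, Pi.single_apply, Finset.sum_add_distrib, mul_add] using this
  have hL1 : ∀ q i, e (i, 1, Sum.inr (Sum.inl (q, 1))) = 0 := by
    intro q i
    have := h (Sum.inl (Sum.inl (i, Sum.inr (Sum.inl (q, 1)))))
    simp only [args, baseL, polar_single_a] at this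
    simpa [Fin.sum_univ_three, hα, hβ, Pi.single_apply, Finset.sum_add_distrib, mul_add] using this
  have hM0 : ∀ q j, e (0, j, Sum.inr (Sum.inl (q, 0))) +
      e (0, j, Sum.inr (Sum.inl (q, 1))) = 0 := by
    intro q i
    have := h (Sum.inl (Sum.inr (Sum.inl (i, Sum.inr (Sum.inl (q, 0))))))
    simp only [args, baseM, polar_single_b] at this
    simp [Fin.sum_univ_three, hα, hβ, Pi.single_apply, Finset.sum_add_distrib, mul_add] at this
    exact this
  have hM1 : ∀ q j, e (1, j, Sum.inr (Sum.inl (q, 0))) -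
      e (1, j, Sum.inr (Sum.inl (q, 1))) = 0 := by
    intro q i
    have := h (Sum.inl (Sum.inr (Sum.inl (i, Sum.inr (Sum.inl (q, 1))))))
    simp only [args, baseM, polar_single_b] at this
    simp [Fin.sum_univ_three, hα, hβ, Pi.single_apply, Finset.sum_add_distrib, mul_add,
      mul_sub] at this
    exact this
  have hLs : ∀ o i, e (i, 0, Sum.inr (Sum.inr o)) + e (i, 2, Sum.inr (Sum.inr o)) +
      e (i, 1, Sum.inl 3) = 0 := by
    intro o i
    have := h (Sum.inl (Sum.inl (i, Sum.inr (Sum.inr o))))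
    simp only [args, baseL, polar_single_a] at this
    simp [Fin.sum_univ_three, hα, hβ, Pi.single_apply, Finset.sum_add_distrib, mul_add] at this
    linear_combination this / 2
  have hMs : ∀ o j, e (1, j, Sum.inr (Sum.inr o)) + e (2, j, Sum.inr (Sum.inr o)) +
      e (0, j, Sum.inl 1) = 0 := by
    intro o j
    have := h (Sum.inl (Sum.inr (Sum.inl (j, Sum.inr (Sum.inr o)))))
    simp only [args, baseM, polar_single_b] at this
    simp [Fin.sum_univ_three, hα, hβ, Pi.single_apply, Finset.sum_add_distrib, mul_add] at this
    linear_combination this / 2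
  have hk : k + 1 ≠ k := by
    fin_cases k <;> decide
  have hP : ∀ c, polar e (mk ![1, 1, 0] ![0, 2, -1] 0) (mk ![1, 1, 0] ![0, 2, -1] 0)
      (Pi.single c 1) = 0 := by
    intro c
    simpa only [args, baseP, if_true] using h (Sum.inl (Sum.inr (Sum.inr (k, c))))
  have hQ : ∀ c, polar e (mk ![0, 2, 1] ![-1, 1, 0] 0) (mk ![0, 2, 1] ![-1, 1, 0] 0)
      (Pi.single c 1) = 0 := by
    intro c
    simpa only [args, baseP, if_neg hk] using h (Sum.inl (Sum.inr (Sum.inr (k + 1, c))))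
  have hU : ∀ c, c ≠ Sum.inl 0 →
      polar e (mk ![1, 1, 0] ![0, 2, -1] 0) baseU (Pi.single c 1) = 0 := by
    intro c hc
    simpa only [args, baseP, if_neg hc, if_true] using h (Sum.inr c)
  -- This is the auxiliary condition.
  have hA : e (2, 0, Sum.inl 1) = 0 := by
    have := h (Sum.inr (Sum.inl 0))
    simp only [args, if_true, polar_single_a] at this
    simpa [Fin.sum_univ_three, hα, hβ, Pi.single_apply, Finset.sum_add_distrib, mul_add,
      mul_sub] using this
  -- The `z`-derivatives at the ambient points.
  have hPz : ∀ z, 2 * e (0, 1, Sum.inr z) - e (0, 2, Sum.inr z) + 2 * e (1, 1, Sum.inr z) -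
      e (1, 2, Sum.inr z) = 0 := by
    intro z
    have := hP (Sum.inr (Sum.inr z))
    simp [polar_single_z, Fin.sum_univ_three] at this
    linear_combination this / 2
  have hQz : ∀ z, 2 * e (1, 1, Sum.inr z) - 2 * e (1, 0, Sum.inr z) + e (2, 1, Sum.inr z) -
      e (2, 0, Sum.inr z) = 0 := by
    intro z
    have := hQ (Sum.inr (Sum.inr z))
    simp [polar_single_z, Fin.sum_univ_three] at this
    linear_combination this / 2
  have hUz : ∀ z, e (0, 0, Sum.inr z) - e (0, 1, Sum.inr z) + e (1, 0, Sum.inr z) -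
      e (1, 1, Sum.inr z) + 2 * e (2, 1, Sum.inr z) - e (2, 2, Sum.inr z) = 0 := by
    intro z
    have := hU (Sum.inr (Sum.inr z)) (by simp)
    simp [polar_single_z, Fin.sum_univ_three, baseU] at this
    linear_combination this
  have hT : ∀ (q : Fin r) (j : Fin 2) (i i' : Fin 3), e (i, i', Sum.inr (Sum.inl (q, j))) = 0 := by
    intro q
    have hX0 := hL0 q
    have hY1 := hL1 q
    have hY00 : e (0, 0, Sum.inr (Sum.inl (q, 1))) = 0 := by
      linear_combination hM0 q 0 - hX0 0
    have hY10 : e (1, 0, Sum.inr (Sum.inl (q, 1))) = 0 := by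
      linear_combination hX0 1 - hM1 q 0
    have hX01 : e (0, 1, Sum.inr (Sum.inl (q, 0))) = 0 := by
      linear_combination hM0 q 1 - hY1 0
    have hX11 : e (1, 1, Sum.inr (Sum.inl (q, 0))) = 0 := by
      linear_combination hM1 q 1 + hY1 1
    have hX := hPz (Sum.inl (q, 0))
    have hY := hPz (Sum.inl (q, 1))
    have hX02 : e (0, 2, Sum.inr (Sum.inl (q, 0))) = 0 := by
      linear_combination (hY - hX) / 2 + hX01 + hX11 - hY1 0 - hY1 1 + (hM0 q 2 - hM1 q 2) / 2
    have hX12 : e (1, 2, Sum.inr (Sum.inl (q, 0))) = 0 := by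
      linear_combination -hX + 2 * hX01 + 2 * hX11 - hX02
    have hY02 : e (0, 2, Sum.inr (Sum.inl (q, 1))) = 0 := by
      linear_combination hM0 q 2 - hX02
    have hY12 : e (1, 2, Sum.inr (Sum.inl (q, 1))) = 0 := by
      linear_combination hX12 - hM1 q 2
    have hX21 : e (2, 1, Sum.inr (Sum.inl (q, 0))) = 0 := by
      linear_combination hQz (Sum.inl (q, 0)) - 2 * hX11 + 2 * hX0 1 + hX0 2
    have hY20 : e (2, 0, Sum.inr (Sum.inl (q, 1))) = 0 := by
      linear_combination -hQz (Sum.inl (q, 1)) + 2 * hY1 1 - 2 * hY10 + hY1 2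
    have hX22 : e (2, 2, Sum.inr (Sum.inl (q, 0))) = 0 := by
      linear_combination -hUz (Sum.inl (q, 0)) + hX0 0 - hX01 + hX0 1 - hX11 + 2 * hX21
    have hY22 : e (2, 2, Sum.inr (Sum.inl (q, 1))) = 0 := by
      linear_combination -hUz (Sum.inl (q, 1)) + hY00 - hY1 0 + hY10 - hY1 1 + 2 * hY1 2
    intro j i i'
    fin_cases j <;> fin_cases i <;> fin_cases i' <;> first | exact hX0 _ | exact hY1 _ | assumption
  -- The derivatives in the `a`- and `b`-directions at the ambient points.
  have hPa := fun i => hP (Sum.inl i)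
  have hQa := fun i => hQ (Sum.inl i)
  have hPb := fun i => hP (Sum.inr (Sum.inl i))
  have hQb := fun i => hQ (Sum.inr (Sum.inl i))
  have hUa1 := hU (Sum.inl 1) (by simp)
  have hUa2 := hU (Sum.inl 2) (by simp)
  have hUb := fun i => hU (Sum.inr (Sum.inl i)) (by simp)
  simp only [polar_single_a, polar_single_b, Fin.sum_univ_three, hα, hβ, baseU, mk_a, mk_b,
    mk_z] at hPa hQa hPb hQb hUa1 hUa2 hUb
  simp [Fin.forall_fin_succ, hT, -mul_eq_zero, -neg_add_rev] at hPa hQa hPb hQb hUa1 hUa2 hUb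
  obtain ⟨hPa0, hPa1, hPa2⟩ := hPa
  obtain ⟨hQa0, hQa1, hQa2⟩ := hQa
  obtain ⟨hPb0, hPb1, hPb2⟩ := hPb
  obtain ⟨hQb0, hQb1, hQb2⟩ := hQb
  obtain ⟨hUb0, hUb1, hUb2⟩ := hUb
  -- The coefficients below are obtained by Gaussian elimination. These eight are determined without
  -- the single coordinate `z` and without the Hessian conditions.
  have hA21 : e (2, 1, Sum.inl 1) = 0 := by
    linear_combination 1/12 * hPa0 + 1/12 * hPa1 + 1/6 * hPb1 + 1/6 * hPb2
  have hA22 : e (2, 2, Sum.inl 1) = 0 := by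
    linear_combination -1/6 * hPa0 - 1/6 * hPa1 + 2/3 * hPb1 + 1/6 * hPb2
  have hB00 : e (0, 0, Sum.inl 3) = 0 := by
    linear_combination -1/12 * hPa0 + 1/6 * hPa1 - 1/6 * hPb1 + 1/12 * hPb2
  have hB10 : e (1, 0, Sum.inl 3) = 0 := by
    linear_combination 1/6 * hPa0 - 1/12 * hPa1 - 1/6 * hPb1 + 1/12 * hPb2
  have hA00 : e (0, 0, Sum.inl 1) = 0 := by
    linear_combination -1/6 * hQa1 - 1/12 * hQa2 + 1/12 * hQb0 + 1/6 * hQb1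
  have hA01 : e (0, 1, Sum.inl 1) = 0 := by
    linear_combination 1/6 * hQa1 + 1/12 * hQa2 + 1/6 * hQb0 + 1/12 * hQb1
  have hB12 : e (1, 2, Sum.inl 3) = 0 := by
    linear_combination -1/6 * hQa1 + 1/6 * hQa2 + 1/12 * hQb0 - 1/12 * hQb1
  have hB22 : e (2, 2, Sum.inl 3) = 0 := by
    linear_combination 2/3 * hQa1 - 1/6 * hQa2 + 1/6 * hQb0 - 1/6 * hQb1
  simp only [hA, hA21, hB00, hB10, hA00, hA01, hB12,
    hB22] at hPa2 hQa0 hPb0 hQb2 hUa1 hUa2 hUb0 hUb1 hUb2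
  obtain ⟨⟨hA02, hA10, hA11, hA12⟩, ⟨hB01, hB02, hB11, hB20, hB21⟩, hTs⟩ :
      (e (0, 2, Sum.inl 1) = 0 ∧ e (1, 0, Sum.inl 1) = 0 ∧ e (1, 1, Sum.inl 1) = 0 ∧
        e (1, 2, Sum.inl 1) = 0) ∧
      (e (0, 1, Sum.inl 3) = 0 ∧ e (0, 2, Sum.inl 3) = 0 ∧ e (1, 1, Sum.inl 3) = 0 ∧
        e (2, 0, Sum.inl 3) = 0 ∧ e (2, 1, Sum.inl 3) = 0) ∧
      ∀ o i j, e (i, j, Sum.inr (Sum.inr o)) = 0 := by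
    obtain rfl | rfl : s = 0 ∨ s = 1 := by omega
    · simp only [Finset.univ_eq_empty, Finset.sum_empty] at hUa1 hUa2 hUb0 hUb1 hUb2
      refine ⟨⟨?_, ?_, ?_, ?_⟩, ⟨?_, ?_, ?_, ?_, ?_⟩, fun o => o.elim0⟩
      · linear_combination -1/8 * hQa0 + 1/8 * hQb2 - 1/2 * hUa1 - 3/8 * hUa2 + 1/8 * hUb0
        - 1/8 * hUb1
      · linear_combination 1/4 * hPa2 - 1/2 * hQa0 + 1/4 * hPb0 - hUa2 + hUb0 - hUb1 + 1/2 * hUb2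
      · linear_combination 1/4 * hPa2 + 1/4 * hPb0 - 1/2 * hUa2 + 1/2 * hUb0 - 1/2 * hUb1
        + 1/2 * hUb2
      · linear_combination -1/2 * hPa2 + 1/8 * hQa0 - 1/8 * hQb2 + 1/2 * hUa1 - 5/8 * hUa2
        + 7/8 * hUb0 + 9/8 * hUb1
      · linear_combination -1/8 * hQa0 - 1/2 * hPb0 + 1/8 * hQb2 + 1/2 * hUa1 + 5/8 * hUa2
        - 7/8 * hUb0 + 7/8 * hUb1
      · linear_combination 1/2 * hUa2 - 1/2 * hUb0 + 1/2 * hUb1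
      · linear_combination 1/8 * hQa0 - 1/8 * hQb2 - 1/2 * hUa1 + 3/8 * hUa2 - 1/8 * hUb0
        + 1/8 * hUb1
      · linear_combination 1/4 * hPa2 + 1/4 * hPb0 - hUb1 + 1/2 * hUb2
      · linear_combination 1/4 * hPa2 - 1/2 * hQa0 + 1/4 * hPb0 - 3/2 * hUa2 + 1/2 * hUb0
        - 3/2 * hUb1 + 1/2 * hUb2
    · simp only [Finset.univ_unique, Finset.sum_singleton,
        Fin.default_eq_zero] at hUa1 hUa2 hUb0 hUb1 hUb2
      have hPs := hPz (Sum.inr 0)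
      have hQs := hQz (Sum.inr 0)
      have hUs := hUz (Sum.inr 0)
      have hLs0 := hLs 0 0
      have hLs1 := hLs 0 1
      have hLs2 := hLs 0 2
      have hMs0 := hMs 0 0
      have hMs1 := hMs 0 1
      have hMs2 := hMs 0 2
      simp only [hA00, hA01] at hMs0 hMs1
      refine ⟨⟨?_, ?_, ?_, ?_⟩, ⟨?_, ?_, ?_, ?_, ?_⟩, fun o i j => ?_⟩
      · linear_combination -1/4 * hQa0 + 1/4 * hQb2 - hUa1 - 3/4 * hUa2 + 1/4 * hUb0 - 1/4 * hUb1
        - 1/4 * hUs + 2 * hMs1 - hMs2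
      · linear_combination -1/4 * hQa0 - 1/6 * hPb0 + 1/4 * hQb2 + 1/12 * hUa2 + 5/12 * hUb0
        + 7/12 * hUb1 - 1/3 * hPs - 1/12 * hUs - 1/3 * hLs0 + 2/3 * hLs1 + hLs2 - hMs0 - hMs2
      · linear_combination 1/4 * hPa2 + 1/12 * hPb0 - 1/6 * hUa2 + 1/6 * hUb0 - 1/6 * hUb1
        + 1/2 * hUb2 + 1/6 * hPs + 1/6 * hUs - 1/3 * hLs0 - 1/3 * hLs1
      · linear_combination -1/2 * hPa2 + 1/4 * hQa0 - 1/3 * hPb0 - 1/4 * hQb2 + hUa1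
        + 5/12 * hUa2 + 1/12 * hUb0 + 23/12 * hUb1 - 2/3 * hPs + 7/12 * hUs - 2/3 * hLs0
        - 2/3 * hLs1 - 2 * hMs1 + hMs2
      · linear_combination 1/4 * hPa2 - 1/4 * hQa0 - 1/4 * hPb0 - 1/4 * hQb2 + hUa1 + 1/4 * hUa2
        - 3/4 * hUb0 - 1/4 * hUb1 + 1/2 * hUb2 + 1/2 * hPs + 3/4 * hUs - hLs1 - hLs2 + hMs0
        - 2 * hMs1 + 2 * hMs2
      · linear_combination 1/4 * hPa2 - 1/4 * hQa0 + 1/4 * hPb0 - 1/4 * hQb2 - 1/4 * hUa2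
        - 1/4 * hUb0 - 3/4 * hUb1 + 1/2 * hUb2 + 1/2 * hPs + 1/4 * hUs - hLs1 - hLs2 + hMs0
        + hMs2
      · linear_combination 1/4 * hPa2 - 1/4 * hQa0 + 1/4 * hPb0 - 1/4 * hQb2 - hUa1 - 3/4 * hUa2
        + 1/4 * hUb0 - 5/4 * hUb1 + 1/2 * hUb2 + 1/2 * hPs - 1/4 * hUs - hLs1 - hLs2 + hMs0
        + 2 * hMs1
      · linear_combination 1/4 * hPa2 + 1/4 * hPb0 - hUb1 + 1/2 * hUb2 + 1/2 * hPs
      · linear_combination -1/4 * hPa2 - 1/4 * hPb0 + 1/2 * hQb2 + hUb1 - 1/2 * hUb2 - 1/2 * hPs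
        + 2 * hLs1 + 2 * hLs2 - 2 * hMs0 - 2 * hMs2
      · rw [Subsingleton.elim o 0]
        fin_cases i <;> fin_cases j <;>
          simp only [Fin.zero_eta, Fin.mk_one, Fin.reduceFinMk]
        · linear_combination 1/12 * hQa0 + 1/6 * hPb0 - 1/12 * hQb2 - 1/12 * hUa2 + 1/4 * hUb0
          - 1/4 * hUb1 + 1/3 * hPs + 2/3 * hQs + 5/12 * hUs + 1/3 * hLs0 + 2/3 * hMs0
          - 4/3 * hMs1 + 1/3 * hMs2
        · linear_combination -1/4 * hPa2 + 1/3 * hQa0 - 1/12 * hPb0 + 1/6 * hQb2 + 2/3 * hUa2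
          + hUb1 - 1/2 * hUb2 - 1/6 * hPs - 1/3 * hQs - 1/3 * hUs + 1/3 * hLs0 + hLs1 + hLs2
          - 4/3 * hMs0 - 1/3 * hMs1 - 2/3 * hMs2
        · linear_combination -1/4 * hPa2 + 1/6 * hQa0 + 1/12 * hPb0 + 1/3 * hQb2 - hUa1
          - 1/6 * hUa2 + 1/2 * hUb0 + 1/2 * hUb1 - 1/2 * hUb2 - 5/6 * hPs - 2/3 * hQs - 7/6 * hUs
          + 2/3 * hLs0 + hLs1 + hLs2 - 5/3 * hMs0 + 10/3 * hMs1 - 7/3 * hMs2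
        · linear_combination -1/12 * hQa0 + 1/12 * hQb2 - 1/4 * hUa2 + 1/12 * hUb0 - 1/12 * hUb1
          - 2/3 * hQs - 1/12 * hUs + 1/3 * hLs1 - 2/3 * hMs0 + 4/3 * hMs1 - 1/3 * hMs2
        · linear_combination -1/12 * hQa0 + 1/12 * hQb2 - 1/4 * hUa2 + 1/12 * hUb0 - 1/12 * hUb1
          + 1/3 * hQs - 1/12 * hUs + 1/3 * hLs1 + 1/3 * hMs0 + 1/3 * hMs1 - 1/3 * hMs2
        · linear_combination -1/4 * hPa2 + 1/3 * hQa0 - 1/4 * hPb0 + 1/6 * hQb2 + hUa1 + hUa2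
          - 1/3 * hUb0 + 4/3 * hUb1 - 1/2 * hUb2 - 1/2 * hPs + 2/3 * hQs + 1/3 * hUs + 5/3 * hLs1
          + hLs2 - 1/3 * hMs0 - 10/3 * hMs1 + 1/3 * hMs2
        · linear_combination 1/12 * hQa0 - 1/12 * hQb2 + 1/4 * hUa2 - 1/12 * hUb0 + 1/12 * hUb1
          + 2/3 * hQs + 1/12 * hUs - 1/3 * hLs1 + 5/3 * hMs0 - 4/3 * hMs1 + 1/3 * hMs2
        · linear_combination 1/12 * hQa0 - 1/12 * hQb2 + 1/4 * hUa2 - 1/12 * hUb0 + 1/12 * hUb1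
          - 1/3 * hQs + 1/12 * hUs - 1/3 * hLs1 - 1/3 * hMs0 + 2/3 * hMs1 + 1/3 * hMs2
        · linear_combination 1/4 * hPa2 - 1/12 * hQa0 + 1/4 * hPb0 - 5/12 * hQb2 - 1/4 * hUa2
          + 1/12 * hUb0 - 13/12 * hUb1 + 1/2 * hUb2 + 1/2 * hPs - 2/3 * hQs - 1/12 * hUs
          - 5/3 * hLs1 - hLs2 + 1/3 * hMs0 + 4/3 * hMs1 + 5/3 * hMs2
  funext ⟨i, j, c⟩
  rw [Pi.zero_apply]
  obtain c | ⟨q, j'⟩ | o := c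
  · fin_cases c
    · exact hα i j
    · fin_cases i <;> fin_cases j <;> assumption
    · exact hβ i j
    · fin_cases i <;> fin_cases j <;> assumption
  · exact hT q j' i j
  · exact hTs o i j

end Base

/-! ### The generic configuration of the theorem -/

section Conclusion

variable {n r s : ℕ}

lemma card_var (h : n = 2 * r + s + 5) : Fintype.card (Var (Idx r s)) = n + 1 := by
  simp only [Fintype.card_sum, Fintype.card_prod, Fintype.card_fin]
  omega

lemma card_col (h : n = 2 * r + s + 5) : Fintype.card (Col (Idx r s)) = n - 2 := by
  simp only [Fintype.card_sum, Fintype.card_prod, Fintype.card_fin]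
  omega

lemma generic_base (hs : s ≤ 1) (κ : Var (Idx r s) ≃ Fin (n + 1))
    (ε : Col (Idx r s) ≃ Fin (n - 2)) (k : Fin 2) :
    Generic fun t : Par n → ℂ =>
      (∀ k, (topBlock κ ε k (parA t k)).det ≠ 0) ∧
      ((frame κ ε (parA t)).submatrix id κ).det ≠ 0 ∧
      (frame κ ε (parA t)).mulVec (parP t k) (Sum.inl 0) ≠ 0 ∧
      Function.Bijective (sysMat (fun s => (frame κ ε (parA t)).mulVec (parPt t 0 (ε s)))
        (fun s => (frame κ ε (parA t)).mulVec (parPt t 1 (ε s)))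
        (fun k => (frame κ ε (parA t)).mulVec (parP t k)) k baseU).mulVec := by
  refine generic_of_base κ ε k (l := baseL) (m := baseM) (p := baseP k) ?_ ?_ ?_ (base_ker hs k)
  · rintro (j | ⟨q, j⟩ | o) i
    · rfl
    · fin_cases j <;> rfl
    · rfl
  · rintro (j | ⟨q, j⟩ | o) i
    · rfl
    · fin_cases j <;> rfl
    · rfl
  · simp [baseP]

end Conclusion

theorem cubics_two_codim3_subspaces (n : ℕ) (hn : 5 ≤ n) :
    Generic
      (ι := (Fin 2 × Fin (n + 1) × Fin (n - 2)) ⊕ (Fin 2 × Fin (n - 2) × Fin (n - 2)) ⊕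
        (Fin 2 × Fin (n + 1))) fun t =>
      let A : Fin 2 → Matrix (Fin (n + 1)) (Fin (n - 2)) ℂ :=
        fun k => Matrix.of fun i j => t (Sum.inl (k, i, j))
      let pt : Fin 2 → Fin (n - 2) → Fin (n + 1) → ℂ :=
        fun k s => (A k).mulVec fun j => t (Sum.inr (Sum.inl (k, s, j)))
      let p : Fin 2 → Fin (n + 1) → ℂ := fun k i => t (Sum.inr (Sum.inr (k, i)))
      let U : Set (Fin (n + 1) → ℂ) := Set.range (A 0).mulVec ∪ Set.range (A 1).mulVec
      let S : Set (Fin (n + 1) → ℂ) := Set.range (pt 0) ∪ Set.range (pt 1) ∪ Set.range p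
      (∀ k, Function.Injective (A k).mulVec) ∧
      Module.finrank ℂ (SingSpace n 3 S U) = n + 1 ∧
      (∀ q ∈ Set.range (A 0).mulVec ∩ Set.range (A 1).mulVec,
        ∀ f ∈ SingSpace n 3 S U, SingularAt f q) ∧
      ∀ k : Fin 2, ∃ ε > 0, ∀ q : Fin (n + 1) → ℂ,
        (∀ f ∈ SingSpace n 3 S U, SingularAt f q) → dist q (p k) < ε →
        ∃ c : ℂ, q = c • p k := by

  obtain ⟨r, s, hs, hrs⟩ : ∃ r s : ℕ, s ≤ 1 ∧ n = 2 * r + s + 5 :=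
    ⟨(n - 5) / 2, (n - 5) % 2, by omega, by omega⟩
  let κ : Var (Idx r s) ≃ Fin (n + 1) := Fintype.equivFinOfCardEq (card_var hrs)
  let ε : Col (Idx r s) ≃ Fin (n - 2) := Fintype.equivFinOfCardEq (card_col hrs)
  refine ((generic_base hs κ ε 0).and (generic_base hs κ ε 1)).mono ?_
  rintro t ⟨⟨hB, hG, hp₀, h₀⟩, -, -, hp₁, h₁⟩
  obtain ⟨H, hGH, hHG⟩ := frame_inverse κ ε hG
  have hL : ∀ q, q ∈ Set.range (parA t 0).mulVec ↔
      ∀ i, (frame κ ε (parA t)).mulVec q (Sum.inl i) = 0 := mem_range_mulVec_iff κ ε (hB 0)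
  have hM : ∀ q, q ∈ Set.range (parA t 1).mulVec ↔
      ∀ j, (frame κ ε (parA t)).mulVec q (Sum.inr (Sum.inl j)) = 0 :=
    mem_range_mulVec_iff κ ε (hB 1)
  have hl : ∀ s, parPt t 0 s ∈ Set.range (parA t 0).mulVec := fun s => ⟨_, rfl⟩
  have hm : ∀ s, parPt t 1 s ∈ Set.range (parA t 1).mulVec := fun s => ⟨_, rfl⟩
  refine ⟨fun k => mulVec_injective κ ε (hB k),
    finrank_singSpace (card_var hrs) hGH hHG hL hM hl hm h₀, ?_, fun k => ?_⟩
  · rintro q ⟨hq₀, hq₁⟩ f hf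
    obtain ⟨e, rfl, -⟩ := (mem_singSpace_iff_cond (ε := ε) (k := 0) (u := baseU) (p := parP t)
      hGH hHG hL hM hl hm f).mp hf
    rw [singularAt_cubic_iff hGH]
    exact fun w => polar_eq_zero_of_inter e _ w ((hL q).mp hq₀) ((hM q).mp hq₁)
  · fin_cases k
    · exact locus_near hGH hHG hL hM hl hm hp₀ h₀
    · exact locus_near hGH hHG hL hM hl hm hp₁ h₁
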